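/- arXiv:2406.17857 — 4 statements merged into one kernel-verified Lean document; each statement's English description precedes it below -/
import Mathlib

section
/- Let n and k be positive integers with k < n/2, and let 𝓕 be a pairwise-intersecting family of k-element subsets of {1,…,n} with |𝓕| = C(n−1, k−1). Then there is a fixed element i ∈ {1,…,n} such that 𝓕 consists of all k-element subsets of {1,…,n} containing i. -/
/-!
The proof is Katona's circle method, with an analysis of its case of equality.

Place the `n` points around a circle by a bijection `σ : ZMod n ≃ Fin n`. Two arcs of length `k`
that meet have starting points at cyclic distance less than `k`, so an intersecting family `𝓕`
contains at most `k` of the `n` arcs of `σ` (`card_starts_le`). Averaging over all `σ`, each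
`k`-set being an arc equally often (`card_incidences_eq`), turns this into the Erdős–Ko–Rado
bound; if `𝓕` attains the bound then every `σ` has exactly `k` arcs in `𝓕` (`card_starts_eq`).
As `2 * k < n`, those `k` arcs are exactly the arcs through one position `c` (`exists_centre`).

Exchanging two adjacent positions of `σ`, both different from `c`, changes at most two arcs, too few
to move the centre (`IsCentre.swap_adjacent`). Hence the centre survives every rearrangement of the
other positions, and every `k`-set containing `i = σ c` becomes an arc through `c` for a suitable
rearrangement, so it lies in `𝓕` (`IsCentre.mem_family`). A member of `𝓕` avoiding `i` would be
disjoint from some `k`-set containing `i`, so there is none.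
-/

namespace EKR

open Finset

variable {n : ℕ} [NeZero n]

/-- The arc of length `k` starting at `s`, i.e. the positions `s, s + 1, …, s + k - 1` of the
circle `ZMod n`. -/
def arc (k : ℕ) (s : ZMod n) : Finset (ZMod n) := {p | (p - s).val < k}

/-- The starting points of the arcs of length `k` that the circular arrangement `σ` places
in `𝓕`. -/
def starts (k : ℕ) (𝓕 : Finset (Finset (Fin n))) (σ : ZMod n ≃ Fin n) : Finset (ZMod n) :=
  {s | (arc k s).map σ.toEmbedding ∈ 𝓕}

/-- The position `c` is a centre of `𝓕` in the arrangement `σ` if the arcs of length `k` lying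
in `𝓕` are exactly the arcs through `c`. -/
def IsCentre (k : ℕ) (𝓕 : Finset (Finset (Fin n))) (σ : ZMod n ≃ Fin n) (c : ZMod n) : Prop :=
  ∀ s, (arc k s).map σ.toEmbedding ∈ 𝓕 ↔ (c - s).val < k

/-! ### Cyclic arithmetic -/

/-- Subtraction in `ZMod n` on representatives, in the form used by `omega`. -/
lemma val_sub_cases (a b : ZMod n) :
    (a - b).val + b.val = a.val ∨ (a - b).val + b.val = a.val + n := by
  have h := ZMod.val_add (a - b) b
  rw [sub_add_cancel] at h
  have h1 := ZMod.val_lt (a - b)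
  have h2 := ZMod.val_lt b
  rcases lt_or_ge ((a - b).val + b.val) n with h3 | h3
  · rw [Nat.mod_eq_of_lt h3] at h; omega
  · rw [Nat.mod_eq_sub_mod h3, Nat.mod_eq_of_lt (by omega)] at h; omega

omit [NeZero n] in
lemma val_natCast_of_lt {m : ℕ} (h : m < n) : ((m : ZMod n)).val = m := ZMod.val_cast_of_lt h

lemma card_arc {k : ℕ} (hk : k ≤ n) (s : ZMod n) : (arc k s).card = k := by
  have : arc k s = (range k).image (fun t : ℕ => s + (t : ZMod n)) := by
    ext p
    simp only [arc, mem_filter, mem_univ, true_and, mem_image, mem_range]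
    constructor
    · intro h
      exact ⟨(p - s).val, h, by rw [ZMod.natCast_zmod_val]; ring⟩
    · rintro ⟨t, ht, rfl⟩
      rw [add_sub_cancel_left, val_natCast_of_lt (by omega)]
      exact ht
  rw [this, card_image_of_injOn, card_range]
  intro a ha b hb hab
  simp only [coe_range, Set.mem_Iio] at ha hb
  have h := congrArg ZMod.val (add_left_cancel hab)
  rwa [val_natCast_of_lt (by omega), val_natCast_of_lt (by omega)] at h

/-- Arcs that meet have starting points at cyclic distance less than `k`. -/
lemma dist_of_arcs_meet {k : ℕ} {s t : ZMod n} (h : (arc k s ∩ arc k t).Nonempty) :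
    (t - s).val < k ∨ n < (t - s).val + k := by
  obtain ⟨p, hp⟩ := h
  simp only [arc, mem_inter, mem_filter, mem_univ, true_and] at hp
  have h1 := val_sub_cases p s
  have h2 := val_sub_cases p t
  have h3 := val_sub_cases t s
  have := ZMod.val_lt (t - s)
  omega

/-! ### Pairwise close points on a circle -/

section Close

variable {k : ℕ} {S : Finset (ZMod n)}

/-- The offset `v` of `p` from `s₀` if `v < k`, and otherwise `v - (n - k)`. A point close to `s₀`
is thus sent to the `d < k` for which its offset is `d` or, modulo `n`, `d - k`. -/
def fold (k : ℕ) (s₀ p : ZMod n) : ℕ :=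
  if (p - s₀).val < k then (p - s₀).val else (p - s₀).val - (n - k)

lemma fold_mapsTo (hkn : 2 * k < n)
    (hS : ∀ s ∈ S, ∀ t ∈ S, (t - s).val < k ∨ n < (t - s).val + k) {s₀ : ZMod n} (h₀ : s₀ ∈ S) :
    Set.MapsTo (fold k s₀) S (range k) := by
  intro p hp
  have h := hS s₀ h₀ p hp
  have := ZMod.val_lt (p - s₀)
  simp only [fold, coe_range, Set.mem_Iio]
  split_ifs <;> omega

/-- Points at offsets `d` and `d - k` are at distance `k`, hence not both in `S`. -/
lemma fold_injOn (hkn : 2 * k < n)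
    (hS : ∀ s ∈ S, ∀ t ∈ S, (t - s).val < k ∨ n < (t - s).val + k) {s₀ : ZMod n} (h₀ : s₀ ∈ S) :
    Set.InjOn (fold k s₀) S := by
  intro p hp q hq hpq
  have h1 := hS s₀ h₀ p hp
  have h2 := hS s₀ h₀ q hq
  have h3 := hS p hp q hq
  have h4 := val_sub_cases (q - s₀) (p - s₀)
  rw [sub_sub_sub_cancel_right] at h4
  have := ZMod.val_lt (p - s₀)
  have := ZMod.val_lt (q - s₀)
  have := ZMod.val_lt (q - p)
  have h5 : (p - s₀).val = (q - s₀).val := by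
    simp only [fold] at hpq
    split_ifs at hpq <;> omega
  exact sub_left_injective (ZMod.val_injective n h5)

lemma card_le_of_close (hkn : 2 * k < n)
    (hS : ∀ s ∈ S, ∀ t ∈ S, (t - s).val < k ∨ n < (t - s).val + k) : S.card ≤ k := by
  rcases S.eq_empty_or_nonempty with rfl | ⟨s₀, h₀⟩
  · simp
  · simpa using card_le_card_of_injOn _ (fold_mapsTo hkn hS h₀) (fold_injOn hkn hS h₀)

/-- A set of `k` pairwise close points is an interval of length `k`, described here as the set of
starting points of the arcs through its last point `c`. -/
lemma exists_last_of_close (hk : 0 < k) (hkn : 2 * k < n)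
    (hS : ∀ s ∈ S, ∀ t ∈ S, (t - s).val < k ∨ n < (t - s).val + k) (hcard : S.card = k) :
    ∃ c : ZMod n, ∀ p, p ∈ S ↔ (c - p).val < k := by
  obtain ⟨s₀, h₀⟩ : S.Nonempty := card_pos.1 (by omega)
  have hsurj : Set.SurjOn (fold k s₀) S (range k) :=
    surjOn_of_injOn_of_card_le _ (fold_mapsTo hkn hS h₀) (fold_injOn hkn hS h₀) (by simp [hcard])
  -- The problem is rewritten in terms of the set of offsets `v < n` with `s₀ + v ∈ S`.
  let B : ℕ → Prop := fun v => s₀ + (v : ZMod n) ∈ S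
  have hB : ∀ p, p ∈ S ↔ B (p - s₀).val := by
    intro p; simp only [B]; rw [ZMod.natCast_zmod_val, add_sub_cancel]
  have hB0 : B 0 := by simpa [B] using h₀
  have hclose : ∀ v w, v ≤ w → w < n → B v → B w → w - v < k ∨ n < w - v + k := by
    intro v w hvw hw hv hw'
    have h := hS _ hv _ hw'
    rwa [add_sub_add_left_eq_sub, ← Nat.cast_sub hvw, val_natCast_of_lt (by omega)] at h
  have hcover : ∀ d < k, B d ∨ (0 < d ∧ B (d + (n - k))) := by
    intro d hd
    obtain ⟨p, hp, hpd⟩ := hsurj (by simpa using hd : d ∈ (range k : Set ℕ))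
    have h1 := hS s₀ h₀ p hp
    have hp' := (hB p).1 hp
    simp only [fold] at hpd
    split_ifs at hpd with h2
    · left; rwa [hpd] at hp'
    · right
      have h3 : (p - s₀).val = d + (n - k) := by omega
      rw [h3] at hp'
      exact ⟨by omega, hp'⟩
  have hdown : ∀ d, d + 1 < k → B (d + 1) → B d := by
    intro d hd h
    rcases hcover d (by omega) with hBd | ⟨hd0, hBd⟩
    · exact hBd
    · -- The offsets `d + 1` and `d + (n - k)` are too far apart, as `2 * k < n`.
      have := hclose (d + 1) (d + (n - k)) (by omega) (by omega) h hBd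
      omega
  obtain ⟨D, hDk, hD, hDmax⟩ : ∃ D, D < k ∧ B D ∧ ∀ d, D < d → d < k → ¬ B d := by
    classical
    refine ⟨Nat.findGreatest B (k - 1), ?_, ?_, ?_⟩
    · have := Nat.findGreatest_le (P := B) (k - 1); omega
    · exact Nat.findGreatest_spec (Nat.zero_le _) hB0
    · intro d h1 h2; exact Nat.findGreatest_is_greatest h1 (by omega)
  have hle : ∀ d, d ≤ D → B d := by
    intro d hd
    induction hd using Nat.decreasingInduction with
    | of_succ m hm ih => exact hdown m (by omega) ih
    | self => exact hD
  refine ⟨s₀ + (D : ZMod n), fun p => ?_⟩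
  rw [hB p]
  have h1 := val_sub_cases (D : ZMod n) (p - s₀)
  rw [show (D : ZMod n) - (p - s₀) = s₀ + D - p by ring, val_natCast_of_lt (by omega)] at h1
  have hlt := ZMod.val_lt (p - s₀)
  have hlt' := ZMod.val_lt (s₀ + (D : ZMod n) - p)
  generalize (p - s₀).val = v at *
  generalize (s₀ + (D : ZMod n) - p).val = w at *
  constructor
  · intro hv
    have h2 := hclose 0 v (by omega) hlt hB0 hv
    by_contra hw
    rcases le_or_gt k v with h3 | h3
    · have h4 := hclose (v - (n - k)) v (by omega) hlt (hle _ (by omega)) hv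
      omega
    · exact hDmax v (by omega) h3 hv
  · intro hw
    rcases le_or_gt v D with h3 | h3
    · exact hle v h3
    · rcases hcover (v - (n - k)) (by omega) with h4 | ⟨-, h4⟩
      · exact absurd h4 (hDmax _ (by omega) (by omega))
      · rwa [show v - (n - k) + (n - k) = v by omega] at h4

end Close

/-! ### Averaging over all circular arrangements -/

section Averaging

variable {k : ℕ} {𝓕 : Finset (Finset (Fin n))}

lemma starts_close (hint : ∀ F ∈ 𝓕, ∀ G ∈ 𝓕, (F ∩ G).Nonempty) (σ : ZMod n ≃ Fin n) :
    ∀ s ∈ starts k 𝓕 σ, ∀ t ∈ starts k 𝓕 σ, (t - s).val < k ∨ n < (t - s).val + k := by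
  intro s hs t ht
  simp only [starts, mem_filter, mem_univ, true_and] at hs ht
  have h := hint _ hs _ ht
  rw [← map_inter, map_nonempty] at h
  exact dist_of_arcs_meet h

lemma card_starts_le (hkn : 2 * k < n) (hint : ∀ F ∈ 𝓕, ∀ G ∈ 𝓕, (F ∩ G).Nonempty)
    (σ : ZMod n ≃ Fin n) : (starts k 𝓕 σ).card ≤ k :=
  card_le_of_close hkn (starts_close hint σ)

/-- The pairs `(σ, s)` for which `G` is the arc of `σ` starting at `s`. -/
def incidences (k : ℕ) (G : Finset (Fin n)) : Finset ((ZMod n ≃ Fin n) × ZMod n) :=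
  {q | (arc k q.2).map q.1.toEmbedding = G}

omit [NeZero n] in
lemma exists_perm_map_eq {F G : Finset (Fin n)} (h : F.card = G.card) :
    ∃ π : Equiv.Perm (Fin n), F.map π.toEmbedding = G := by
  let e : {x // x ∈ F} ≃ {x // x ∈ G} := Finset.equivOfCardEq h
  refine ⟨e.extendSubtype, eq_of_subset_of_card_le ?_ (by simp [h])⟩
  intro y hy
  obtain ⟨x, hx, rfl⟩ := mem_map.1 hy
  exact e.extendSubtype_mem x hx

/-- All sets of the same size are arcs equally often, since relabelling the points by a permutation
carries the incidences of one onto those of the other. -/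
lemma card_incidences_eq {F G : Finset (Fin n)} (h : F.card = G.card) :
    (incidences k F).card = (incidences k G).card := by
  obtain ⟨π, hπ⟩ := exists_perm_map_eq h
  refine card_bij (fun q _ => (q.1.trans π, q.2)) ?_ ?_ ?_
  · rintro ⟨σ, s⟩ hq
    simp only [incidences, mem_filter, mem_univ, true_and] at hq ⊢
    rw [← hπ, ← hq, map_map]
    rfl
  · rintro ⟨σ, s⟩ _ ⟨τ, t⟩ _ hq
    simp only [Prod.mk.injEq] at hq ⊢
    refine ⟨?_, hq.2⟩
    ext x
    have := congrArg (fun e : ZMod n ≃ Fin n => e x) hq.1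
    simp only [Equiv.trans_apply, EmbeddingLike.apply_eq_iff_eq] at this
    rw [this]
  · rintro ⟨σ, s⟩ hq
    simp only [incidences, mem_filter, mem_univ, true_and] at hq
    refine ⟨(σ.trans π.symm, s), ?_, ?_⟩
    · simp only [incidences, mem_filter, mem_univ, true_and]
      apply map_injective π.toEmbedding
      rw [hπ, ← hq, map_map]
      congr 1
      ext x
      simp
    · simp [Equiv.trans_assoc]

/-- Double counting of the incidences between arrangements and members of a family. -/
lemma sum_card_starts (𝓕 : Finset (Finset (Fin n))) :
    ∑ σ, (starts k 𝓕 σ).card = ∑ G ∈ 𝓕, (incidences k G).card := by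
  have h1 : ∑ G ∈ 𝓕, (incidences k G).card =
      #{q : (ZMod n ≃ Fin n) × ZMod n | (arc k q.2).map q.1.toEmbedding ∈ 𝓕} := by
    rw [card_eq_sum_card_fiberwise (f := fun q => (arc k q.2).map q.1.toEmbedding) (t := 𝓕)]
    · refine sum_congr rfl fun G hG => ?_
      congr 1
      ext q
      simp only [incidences, mem_filter, mem_univ, true_and]
      constructor
      · intro h; exact ⟨h ▸ hG, h⟩
      · exact fun h => h.2
    · intro q hq
      simpa using hq
  rw [h1]
  simp only [starts, card_filter, Fintype.sum_prod_type]

/-- If `𝓕` attains the Erdős–Ko–Rado bound, every arrangement has exactly `k` arcs in `𝓕`. -/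
lemma card_starts_eq (hk : 0 < k) (hkn : 2 * k < n) (hcard : ∀ F ∈ 𝓕, F.card = k)
    (hint : ∀ F ∈ 𝓕, ∀ G ∈ 𝓕, (F ∩ G).Nonempty)
    (hmax : 𝓕.card = (n - 1).choose (k - 1)) (σ : ZMod n ≃ Fin n) :
    (starts k 𝓕 σ).card = k := by
  obtain ⟨N, hN⟩ : ∃ N, ∀ G : Finset (Fin n), G.card = k → (incidences k G).card = N := by
    let A : Finset (Fin n) := (arc k 0).map σ.toEmbedding
    have hA : A.card = k := by rw [card_map, card_arc (by omega)]
    exact ⟨(incidences k A).card, fun G hG => card_incidences_eq (hG.trans hA.symm)⟩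
  have hF : ∑ σ, (starts k 𝓕 σ).card = 𝓕.card * N := by
    rw [sum_card_starts, sum_const_nat fun G hG => hN G (hcard G hG)]
  -- The value of `N` comes from counting the incidences with the family of all `k`-sets.
  have hall : Fintype.card (ZMod n ≃ Fin n) * n = n.choose k * N := by
    have h := sum_card_starts (k := k) (powersetCard k (univ : Finset (Fin n)))
    rw [sum_const_nat fun G hG => hN G (mem_powersetCard.1 hG).2, card_powersetCard, card_univ,
      Fintype.card_fin] at h
    rw [← h, sum_const_nat (m := n), card_univ]
    intro τ _
    have : starts k (powersetCard k (univ : Finset (Fin n))) τ = univ := by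
      ext s
      simp [starts, mem_powersetCard, card_arc (show k ≤ n by omega)]
    rw [this, card_univ, ZMod.card]
  have hch : n * (n - 1).choose (k - 1) = n.choose k * k := by
    have h := Nat.add_one_mul_choose_eq (n - 1) (k - 1)
    rwa [Nat.sub_add_cancel (by omega),
      Nat.sub_add_cancel (by omega)] at h
  have hsum : ∑ τ : ZMod n ≃ Fin n, (starts k 𝓕 τ).card = ∑ _τ : ZMod n ≃ Fin n, k := by
    rw [hF, hmax, sum_const, card_univ, smul_eq_mul]
    apply Nat.eq_of_mul_eq_mul_left (show 0 < n by omega)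
    calc n * ((n - 1).choose (k - 1) * N) = (n * (n - 1).choose (k - 1)) * N := by ring
      _ = (n.choose k * N) * k := by rw [hch]; ring
      _ = n * (Fintype.card (ZMod n ≃ Fin n) * k) := by rw [← hall]; ring
  exact (sum_eq_sum_iff_of_le fun τ _ => card_starts_le hkn hint τ).1 hsum σ (mem_univ σ)

lemma exists_centre (hk : 0 < k) (hkn : 2 * k < n) (hcard : ∀ F ∈ 𝓕, F.card = k)
    (hint : ∀ F ∈ 𝓕, ∀ G ∈ 𝓕, (F ∩ G).Nonempty)
    (hmax : 𝓕.card = (n - 1).choose (k - 1)) (σ : ZMod n ≃ Fin n) :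
    ∃ c, IsCentre k 𝓕 σ c := by
  obtain ⟨c, hc⟩ := exists_last_of_close hk hkn (starts_close hint σ)
    (card_starts_eq hk hkn hcard hint hmax σ)
  exact ⟨c, fun s => by simpa [starts] using hc s⟩

end Averaging

/-! ### The centre is unaffected by rearranging the other positions -/

section Swap

variable {k : ℕ} {𝓕 : Finset (Finset (Fin n))}

omit [NeZero n] in
lemma map_swap_trans (σ : ZMod n ≃ Fin n) (i j : ZMod n) (T : Finset (ZMod n)) :
    T.map ((Equiv.swap i j).trans σ).toEmbedding =
      (T.map (Equiv.swap i j).toEmbedding).map σ.toEmbedding := by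
  rw [map_map]; rfl

omit [NeZero n] in
lemma map_swap_eq_self {i j : ZMod n} {T : Finset (ZMod n)} (h : i ∈ T ↔ j ∈ T) :
    T.map (Equiv.swap i j).toEmbedding = T := by
  refine eq_of_subset_of_card_le ?_ (by simp)
  intro y hy
  obtain ⟨x, hx, rfl⟩ := mem_map.1 hy
  simp only [Equiv.coe_toEmbedding, Equiv.swap_apply_def]
  split_ifs with h1 h2
  · exact h.1 (h1 ▸ hx)
  · exact h.2 (h2 ▸ hx)
  · exact hx

/-- Only the arc starting at `i + 1` and the arc ending at `i` separate `i` from `i + 1`. -/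
lemma mem_arc_iff_succ (hk : 0 < k) (hkn : k < n) {i s : ZMod n} (h1 : (i + 1 - s).val ≠ 0)
    (h2 : (i + 1 - s).val ≠ k) : i ∈ arc k s ↔ i + 1 ∈ arc k s := by
  simp only [arc, mem_filter, mem_univ, true_and]
  have h3 := val_sub_cases (i + 1 - s) 1
  rw [show i + 1 - s - 1 = i - s by ring] at h3
  have h4 : (1 : ZMod n).val = 1 := by
    have := val_natCast_of_lt (n := n) (m := 1) (by omega)
    simpa using this
  have := ZMod.val_lt (i - s)
  have := ZMod.val_lt (i + 1 - s)
  omega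

/-- If the arcs through `c` and the arcs through `c'` agree up to the arc starting at `j` and the
arc ending just before `j`, and `j` is neither `c` nor `c + 1`, then `c = c'`. -/
lemma centre_unique (hk : 0 < k) (hkn : 2 * k < n) {c c' j : ZMod n} (hj : (j - c).val ≠ 0)
    (hj' : (j - c).val ≠ 1)
    (h : ∀ s, (j - s).val ≠ 0 → (j - s).val ≠ k → ((c - s).val < k ↔ (c' - s).val < k)) :
    c = c' := by
  have hu : (c' - c).val < n := ZMod.val_lt _
  have he : (j - c).val < n := ZMod.val_lt _
  -- All positions are measured from `c`: `x` is the offset of `s`, `u` of `c'`, and `e` of `j`.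
  have key : ∀ x < n, (x = 0 ∨ n < x + k ↔
      (x ≤ (c' - c).val ∧ (c' - c).val < x + k) ∨ (c' - c).val + n < x + k) ∨
      (x = (j - c).val ∨ x + k = (j - c).val ∨ x + k = (j - c).val + n) := by
    intro x hx
    have h1 := val_sub_cases (j - c) (x : ZMod n)
    have h2 := val_sub_cases (0 : ZMod n) (x : ZMod n)
    have h3 := val_sub_cases (c' - c) (x : ZMod n)
    rw [val_natCast_of_lt hx] at h1 h2 h3
    have h4 := h (c + x)
    rw [show j - (c + x) = j - c - x by ring, show c - (c + x) = 0 - (x : ZMod n) by ring,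
      show c' - (c + x) = c' - c - x by ring] at h4
    rw [ZMod.val_zero] at h2
    have := ZMod.val_lt (j - c - (x : ZMod n))
    have := ZMod.val_lt (0 - (x : ZMod n))
    have := ZMod.val_lt (c' - c - (x : ZMod n))
    rw [or_iff_not_imp_right]
    intro hx'
    have h5 := h4 (by omega) (by omega)
    clear h4
    constructor
    · intro h6
      have := h5.1 (by omega)
      omega
    · intro h6
      have := h5.2 (by omega)
      omega
  suffices (c' - c).val = 0 from
    (sub_eq_zero.1 ((ZMod.val_eq_zero _).1 this)).symm
  generalize (c' - c).val = u at *
  generalize (j - c).val = e at *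
  by_contra hu0
  -- In each case the offsets used are starts of arcs through just one of the centres, and they
  -- cannot all be among the two exceptional ones.
  rcases le_or_gt u (n - k) with hle | hgt
  · have h1 := (key u hu).resolve_left (by omega)
    rcases Nat.lt_or_ge 1 k with hk1 | hk1
    · have h2 : u = 1 ∨ _ := (eq_or_ne u 1).imp_right
        fun hu1 => (key (u - 1) (by omega)).resolve_left (by omega)
      have h3 := (key (n - k + 1) (by omega)).resolve_left (by omega)
      omega
    · have h3 := (key 0 (by omega)).resolve_left (by omega)
      omega
  · have h1 := (key 0 (by omega)).resolve_left (by omega)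
    have h2 := (key (u - k + 1) (by omega)).resolve_left (by omega)
    have h3 : u = n - 1 ∨ _ := (eq_or_ne u (n - 1)).imp_right
      fun hu1 => (key (n - 1) (by omega)).resolve_left (by omega)
    omega

variable {σ : ZMod n ≃ Fin n} {c : ZMod n}

lemma IsCentre.swap_adjacent (hex : ∀ τ : ZMod n ≃ Fin n, ∃ c, IsCentre k 𝓕 τ c) (hk : 0 < k)
    (hkn : 2 * k < n) (hc : IsCentre k 𝓕 σ c) {i : ZMod n} (hi : i ≠ c) (hi' : i + 1 ≠ c) :
    IsCentre k 𝓕 ((Equiv.swap i (i + 1)).trans σ) c := by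
  obtain ⟨c', hc'⟩ := hex ((Equiv.swap i (i + 1)).trans σ)
  have : c = c' := by
    refine centre_unique (j := i + 1) hk hkn ?_ ?_ ?_
    · rw [Ne, ZMod.val_eq_zero, sub_eq_zero]; exact hi'
    · intro h
      apply hi
      have h2 := congrArg (Nat.cast : ℕ → ZMod n) h
      rw [ZMod.natCast_zmod_val, Nat.cast_one] at h2
      linear_combination h2
    · intro s h1 h2
      rw [← hc s, ← hc' s, map_swap_trans,
        map_swap_eq_self (mem_arc_iff_succ hk (by omega) h1 h2)]
  rwa [this]

/-- A transposition of positions that are different from `c` is a composition of adjacent ones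
avoiding `c`: for positions at offsets `a` and `a + m + 2` from `c`, conjugate the transposition of
those at offsets `a` and `a + m + 1` by an adjacent one. -/
lemma IsCentre.swap_offset (hex : ∀ τ : ZMod n ≃ Fin n, ∃ c, IsCentre k 𝓕 τ c) (hk : 0 < k)
    (hkn : 2 * k < n) {a : ℕ} (ha : 0 < a) (m : ℕ) : ∀ (σ : ZMod n ≃ Fin n),
    IsCentre k 𝓕 σ c → a + m + 1 < n →
    IsCentre k 𝓕 ((Equiv.swap (c + (a : ZMod n)) (c + ((a + m + 1 : ℕ) : ZMod n))).trans σ) c := by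
  have hne : ∀ x : ℕ, 0 < x → x < n → c + (x : ZMod n) ≠ c := by
    intro x hx hxn h
    rw [add_eq_left] at h
    have := congrArg ZMod.val h
    rw [val_natCast_of_lt hxn, ZMod.val_zero] at this
    omega
  have hadj : ∀ x : ℕ, 0 < x → x + 1 < n → ∀ τ, IsCentre k 𝓕 τ c →
      IsCentre k 𝓕 ((Equiv.swap (c + (x : ZMod n)) (c + ((x + 1 : ℕ) : ZMod n))).trans τ) c := by
    intro x hx hxn τ hτ
    have h := hne (x + 1) (by omega) hxn
    rw [Nat.cast_add, Nat.cast_one, ← add_assoc] at h ⊢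
    exact hτ.swap_adjacent hex hk hkn (hne x hx (by omega)) h
  induction m with
  | zero => intro σ hσ hn; exact hadj a ha hn σ hσ
  | succ m ih =>
    intro σ hσ hn
    have h1 := hadj (a + m + 1) (by omega) hn σ hσ
    have h2 := ih _ h1 (by omega)
    have h3 := hadj (a + m + 1) (by omega) hn _ h2
    have hinj : ∀ x y : ℕ, x < n → y < n → x ≠ y → c + (x : ZMod n) ≠ c + (y : ZMod n) := by
      intro x y hx hy hxy h
      have := congrArg ZMod.val (add_left_cancel h)
      rw [val_natCast_of_lt hx, val_natCast_of_lt hy] at this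
      exact hxy this
    have hconj := Equiv.swap_mul_swap_mul_swap
      (hinj a (a + m + 1) (by omega) (by omega) (by omega))
      (hinj a (a + m + 1 + 1) (by omega) (by omega) (by omega))
    rw [Equiv.swap_comm, show a + (m + 1) + 1 = a + m + 1 + 1 by ring, ← hconj]
    exact h3

lemma IsCentre.swap (hex : ∀ τ : ZMod n ≃ Fin n, ∃ c, IsCentre k 𝓕 τ c) (hk : 0 < k)
    (hkn : 2 * k < n) (hc : IsCentre k 𝓕 σ c) {i j : ZMod n} (hi : i ≠ c) (hj : j ≠ c) :
    IsCentre k 𝓕 ((Equiv.swap i j).trans σ) c := by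
  have hpos : ∀ i, i ≠ c → 0 < (i - c).val := by
    intro i hi
    rw [Nat.pos_iff_ne_zero, Ne, ZMod.val_eq_zero, sub_eq_zero]
    exact hi
  wlog hlt : (i - c).val < (j - c).val generalizing i j
  · rcases eq_or_lt_of_le (not_lt.1 hlt) with h | h
    · have : i = j := (sub_left_injective (ZMod.val_injective n h)).symm
      subst this
      simpa using hc
    · rw [Equiv.swap_comm]
      exact this hj hi h
  have h := hc.swap_offset hex hk hkn (hpos i hi) ((j - c).val - (i - c).val - 1) σ
    (by have := ZMod.val_lt (j - c); omega)
  rwa [show (i - c).val + ((j - c).val - (i - c).val - 1) + 1 = (j - c).val by omega,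
    ZMod.natCast_zmod_val, ZMod.natCast_zmod_val, add_sub_cancel, add_sub_cancel] at h

/-- Every `k`-set of positions through `c` is carried to a chosen arc through `c` by exchanging its
elements outside the arc, one at a time, for elements of the arc. -/
lemma IsCentre.mem_family (hex : ∀ τ : ZMod n ≃ Fin n, ∃ c, IsCentre k 𝓕 τ c) (hk : 0 < k)
    (hkn : 2 * k < n) (m : ℕ) : ∀ (σ : ZMod n ≃ Fin n) (T : Finset (ZMod n)),
    IsCentre k 𝓕 σ c → c ∈ T → T.card = k → (T \ arc k c).card = m →
    T.map σ.toEmbedding ∈ 𝓕 := by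
  have hcc : c ∈ arc k c := by simpa [arc] using hk
  induction m with
  | zero =>
    intro σ T hσ _ hT hm
    have hsub : T ⊆ arc k c := sdiff_eq_empty_iff_subset.1 (card_eq_zero.1 hm)
    have : T = arc k c := eq_of_subset_of_card_le hsub (by rw [card_arc (by omega), hT])
    rw [this, hσ c]
    simpa using hk
  | succ m ih =>
    intro σ T hσ hcT hT hm
    obtain ⟨i, hi⟩ : (T \ arc k c).Nonempty := card_pos.1 (by omega)
    obtain ⟨j, hj⟩ : (arc k c \ T).Nonempty := by
      apply card_pos.1
      rw [card_sdiff_comm (by rw [hT, card_arc (by omega)])]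
      omega
    rw [mem_sdiff] at hi hj
    have hic : i ≠ c := fun h => hi.2 (h ▸ hcc)
    have hjc : j ≠ c := fun h => hj.2 (h ▸ hcT)
    have hmem : ∀ x, x ∈ T.map (Equiv.swap i j).toEmbedding ↔ Equiv.swap i j x ∈ T := by
      intro x
      rw [mem_map_equiv, Equiv.symm_swap]
    have h := ih ((Equiv.swap i j).trans σ) (T.map (Equiv.swap i j).toEmbedding)
      (hσ.swap hex hk hkn hic hjc)
      (by rw [hmem, Equiv.swap_apply_of_ne_of_ne hic.symm hjc.symm]; exact hcT)
      (by rw [card_map, hT])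
      (by
        have : T.map (Equiv.swap i j).toEmbedding \ arc k c = (T \ arc k c).erase i := by
          ext x
          rw [mem_sdiff, hmem, mem_erase, mem_sdiff, Equiv.swap_apply_def]
          split_ifs with h1 h2
          · subst h1; simp [hj.2]
          · subst h2; simp [hj.1]
          · simp [h1]
        rw [this, card_erase_of_mem (mem_sdiff.2 hi), hm, Nat.add_sub_cancel])
    rw [map_swap_trans] at h
    rwa [show (T.map (Equiv.swap i j).toEmbedding).map (Equiv.swap i j).toEmbedding = T by
      ext x; rw [mem_map_equiv, Equiv.symm_swap, hmem, Equiv.swap_apply_self]] at h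

end Swap

end EKR

/-- Erdős–Ko–Rado theorem (uniqueness): for `k < n/2`, a pairwise-intersecting family
of `k`-element subsets of `{1,…,n}` achieving the bound `C(n-1, k-1)` consists of all
`k`-subsets containing some fixed element. -/
theorem erdos_ko_rado_uniqueness (n k : ℕ) (hn : 0 < n) (hk : 0 < k) (hkn : 2 * k < n)
    (𝓕 : Finset (Finset (Fin n)))
    (hcard : ∀ F ∈ 𝓕, F.card = k)
    (hint : ∀ F ∈ 𝓕, ∀ G ∈ 𝓕, (F ∩ G).Nonempty)
    (hmax : 𝓕.card = (n - 1).choose (k - 1)) :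
    ∃ i : Fin n, ∀ F : Finset (Fin n), F ∈ 𝓕 ↔ (F.card = k ∧ i ∈ F) := by
  have : NeZero n := ⟨hn.ne'⟩
  have hex := EKR.exists_centre hk hkn hcard hint hmax
  let σ : ZMod n ≃ Fin n := Fintype.equivOfCardEq (by rw [ZMod.card, Fintype.card_fin])
  obtain ⟨c, hc⟩ := hex σ
  have hstar : ∀ G : Finset (Fin n), G.card = k → σ c ∈ G → G ∈ 𝓕 := by
    intro G hG hcG
    have h := EKR.IsCentre.mem_family hex hk hkn _ σ (G.map σ.symm.toEmbedding) hc
      (by simpa [Finset.mem_map_equiv] using hcG) (by rw [Finset.card_map, hG]) rfl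
    rwa [show (G.map σ.symm.toEmbedding).map σ.toEmbedding = G by
      ext x; simp [Finset.mem_map_equiv]] at h
  refine ⟨σ c, fun F => ⟨fun hF => ⟨hcard F hF, ?_⟩, fun h => hstar F h.1 h.2⟩⟩
  by_contra hcF
  -- A `k`-set through `σ c` that is disjoint from `F` exists because `2 * k ≤ n`.
  obtain ⟨G, hcG, hGF, hG⟩ := Finset.exists_subsuperset_card_eq (s := {σ c}) (t := Fᶜ) (n := k)
    (by simpa using hcF) (by rw [Finset.card_singleton]; exact hk)
    (by rw [Finset.card_compl, Fintype.card_fin, hcard F hF]; omega)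
  obtain ⟨x, hx⟩ := hint F hF G (hstar G hG (by simpa using hcG))
  rw [Finset.mem_inter] at hx
  exact Finset.mem_compl.1 (hGF hx.2) hx.1
end

section
/- Let 𝔽 be a field of characteristic different from 2, let V be an n-dimensional 𝔽-vector space, and let k be a positive integer with k ≤ n/2. If L is a subspace of the k-th exterior power ⋀^k V such that x ∧ y = 0 for all x, y ∈ L, then dim L ≤ C(n−1, k−1). -/
/-!
Fix a basis `e` of `V` and the induced basis `e_S` of the exterior algebra, indexed by subsets `S`
of `Fin n`. Order these subsets by the colexicographic order, and let `leadSupports` be the set of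
leading index sets of the nonzero elements of `L`. Reading off the coordinates at the leading index
sets is injective on `L`, so `dim L` is at most the number of leading index sets
(`finrank_le_card_leadSupports`); these all have size `k`. They form an intersecting family, so
that the classical Erdős–Ko–Rado theorem bounds their number.

The point is that complementation inside a fixed set `U` reverses the colexicographic order
(`colex_lt_of_disjoint_union_eq`). If `x` and `y` have disjoint leading index sets `S` and `T`,
then a product of a term of `x` at `A ≤ S` and a term of `y` at `B ≤ T` can contribute to the
coefficient of `x ∧ y` at `S ∪ T` only if `A` and `B` are complementary in `S ∪ T`; when `A < S`
this forces `B > T`. Hence that coefficient is, up to sign, the product of the two leading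
coefficients (`repr_mul_lead_ne_zero`), and `x ∧ y ≠ 0`.
-/

open Finset Finset.Colex

namespace EKRExterior

variable {F V : Type*} [Field F] [AddCommGroup V] [Module F V] {n : ℕ}

/-- Complementation inside a fixed set reverses the colexicographic order. -/
lemma colex_lt_of_disjoint_union_eq {S T A B : Finset (Fin n)} (hST : Disjoint S T)
    (hAB : Disjoint A B) (h : A ∪ B = S ∪ T) (hlt : toColex A < toColex S) :
    toColex T < toColex B := by
  rw [← toColex_sdiff_lt_toColex_sdiff'] at hlt ⊢
  have hmem : ∀ i, (i ∈ A ∨ i ∈ B) ↔ (i ∈ S ∨ i ∈ T) := fun i => by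
    simpa using Finset.ext_iff.mp h i
  have h1 : T \ B = A \ S := by
    ext i
    have := hmem i
    have : i ∈ S → i ∉ T := fun h => Finset.disjoint_left.mp hST h
    have : i ∈ A → i ∉ B := fun h => Finset.disjoint_left.mp hAB h
    simp only [mem_sdiff]; tauto
  have h2 : B \ T = S \ A := by
    ext i
    have := hmem i
    have : i ∈ S → i ∉ T := fun h => Finset.disjoint_left.mp hST h
    have : i ∈ A → i ∉ B := fun h => Finset.disjoint_left.mp hAB h
    simp only [mem_sdiff]; tauto
  rwa [h1, h2]

variable (b : Module.Basis (Fin n) F V)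

lemma basis_mul_eq_zero {A B : Finset (Fin n)} (h : ¬ Disjoint A B) :
    b.ExteriorAlgebra A * b.ExteriorAlgebra B = 0 :=
  ExteriorAlgebra.basis_mul_of_not_disjoint b
    (⟨A, rfl⟩ : Set.powersetCard (Fin n) #A) (⟨B, rfl⟩ : Set.powersetCard (Fin n) #B) h

lemma exists_basis_mul {A B : Finset (Fin n)} (h : Disjoint A B) :
    ∃ u : ℤˣ, b.ExteriorAlgebra A * b.ExteriorAlgebra B = u • b.ExteriorAlgebra (A ∪ B) := by
  let s : Set.powersetCard (Fin n) #A := ⟨A, rfl⟩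
  let t : Set.powersetCard (Fin n) #B := ⟨B, rfl⟩
  have hst : Disjoint s.val t.val := h
  have hmul := ExteriorAlgebra.basis_mul_of_disjoint b s t hst
  have hU : (Set.powersetCard.disjUnion hst).val = A ∪ B := by
    ext i
    simp [Set.powersetCard.disjUnion, s, t]
  rw [hU] at hmul
  exact ⟨_, hmul⟩

lemma repr_basis_mul_eq_zero {A B U : Finset (Fin n)} (h : ¬ (Disjoint A B ∧ A ∪ B = U)) :
    b.ExteriorAlgebra.repr (b.ExteriorAlgebra A * b.ExteriorAlgebra B) U = 0 := by
  by_cases hd : Disjoint A B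
  · obtain ⟨u, hu⟩ := exists_basis_mul b hd
    have hne : A ∪ B ≠ U := fun e => h ⟨hd, e⟩
    rcases Int.units_eq_one_or u with rfl | rfl <;> simp [hu, hne]
  · simp [basis_mul_eq_zero b hd]

lemma repr_basis_mul_ne_zero {A B : Finset (Fin n)} (hd : Disjoint A B) :
    b.ExteriorAlgebra.repr (b.ExteriorAlgebra A * b.ExteriorAlgebra B) (A ∪ B) ≠ 0 := by
  obtain ⟨u, hu⟩ := exists_basis_mul b hd
  rcases Int.units_eq_one_or u with rfl | rfl <;> simp [hu]

lemma repr_mul (x y : ExteriorAlgebra F V) (U : Finset (Fin n)) :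
    b.ExteriorAlgebra.repr (x * y) U =
      ∑ A, ∑ B, b.ExteriorAlgebra.repr x A * b.ExteriorAlgebra.repr y B *
        b.ExteriorAlgebra.repr (b.ExteriorAlgebra A * b.ExteriorAlgebra B) U := by
  conv_lhs => rw [← b.ExteriorAlgebra.sum_repr x, ← b.ExteriorAlgebra.sum_repr y]
  simp only [Finset.sum_mul_sum, map_sum, Finsupp.finsetSum_apply, smul_mul_smul_comm, map_smul,
    Finsupp.smul_apply, smul_eq_mul]

/-- `S` is the leading index set of `x`: the colexicographically largest index set at which the
coordinate of `x` does not vanish. -/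
def IsLead (x : ExteriorAlgebra F V) (S : Finset (Fin n)) : Prop :=
  b.ExteriorAlgebra.repr x S ≠ 0 ∧
    ∀ A, b.ExteriorAlgebra.repr x A ≠ 0 → toColex A ≤ toColex S

lemma exists_isLead {x : ExteriorAlgebra F V} (hx : x ≠ 0) : ∃ S, IsLead b x S := by
  have hne : (b.ExteriorAlgebra.repr x).support.Nonempty := by
    simpa [Finsupp.support_nonempty_iff] using hx
  obtain ⟨S, hS, hmax⟩ := Finset.exists_max_image _ (fun A => toColex A) hne
  exact ⟨S, by simpa using hS, fun A hA => hmax A (by simpa using hA)⟩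

/-- At the union of two disjoint leading index sets, only the product of the two leading terms
contributes to `x * y`, so no cancellation can occur. -/
lemma repr_mul_lead_ne_zero {x y : ExteriorAlgebra F V} {S T : Finset (Fin n)}
    (hx : IsLead b x S) (hy : IsLead b y T) (hd : Disjoint S T) :
    b.ExteriorAlgebra.repr (x * y) (S ∪ T) ≠ 0 := by
  have key : ∀ A B, ¬ (A = S ∧ B = T) →
      b.ExteriorAlgebra.repr x A * b.ExteriorAlgebra.repr y B *
        b.ExteriorAlgebra.repr (b.ExteriorAlgebra A * b.ExteriorAlgebra B) (S ∪ T) = 0 := by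
    intro A B hne
    by_contra hprod
    simp only [mul_eq_zero, not_or] at hprod
    obtain ⟨⟨hA, hB⟩, hAB⟩ := hprod
    obtain ⟨hdAB, hU⟩ := not_imp_comm.mp (repr_basis_mul_eq_zero b) hAB
    rcases (hx.2 A hA).lt_or_eq with hlt | heq
    · exact (hy.2 B hB).not_gt (colex_lt_of_disjoint_union_eq hd hdAB hU hlt)
    · have hAS : A = S := by simpa using heq
      subst hAS
      refine hne ⟨rfl, ?_⟩
      rw [← Finset.union_sdiff_cancel_left hdAB, hU, Finset.union_sdiff_cancel_left hd]
  rw [repr_mul, Finset.sum_eq_single S, Finset.sum_eq_single T]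
  · exact mul_ne_zero (mul_ne_zero hx.1 hy.1) (repr_basis_mul_ne_zero b hd)
  · exact fun B _ hB => key S B fun h => hB h.2
  · simp
  · exact fun A _ hA => Finset.sum_eq_zero fun B _ => key A B fun h => hA h.1
  · simp

lemma card_eq_of_repr_ne_zero {k : ℕ} {x : ExteriorAlgebra F V} (hx : x ∈ ⋀[F]^k V)
    {S : Finset (Fin n)} (hS : b.ExteriorAlgebra.repr x S ≠ 0) : #S = k := by
  have hspan := (b.exteriorPower k).sum_repr ⟨x, hx⟩
  apply_fun (fun z => b.ExteriorAlgebra.repr (z : ExteriorAlgebra F V) S) at hspan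
  by_contra hcard
  refine hS (hspan.symm.trans ?_)
  simp only [AddSubmonoidClass.coe_finsetSum, SetLike.val_smul, map_sum, map_smul,
    Finsupp.finsetSum_apply, Finsupp.smul_apply, ← ExteriorAlgebra.basis_eq_coe_basis,
    Module.Basis.repr_self]
  refine Finset.sum_eq_zero fun s _ => ?_
  have hne : (s : Finset (Fin n)) ≠ S := fun e => hcard (e ▸ s.2)
  simp [hne]

open Classical in
/-- The family of leading index sets of the elements of `L`. -/
noncomputable def leadSupports (L : Submodule F (ExteriorAlgebra F V)) : Finset (Finset (Fin n)) :=
  univ.filter fun S => ∃ x ∈ L, IsLead b x S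

lemma mem_leadSupports {L : Submodule F (ExteriorAlgebra F V)} {S : Finset (Fin n)} :
    S ∈ leadSupports b L ↔ ∃ x ∈ L, IsLead b x S := by
  simp [leadSupports]

/-- An element of `L` whose coordinates at all leading index sets vanish is zero, so these
coordinates embed `L` into a space of dimension `#(leadSupports b L)`. -/
lemma finrank_le_card_leadSupports (L : Submodule F (ExteriorAlgebra F V)) :
    Module.finrank F L ≤ #(leadSupports b L) := by
  let f : L →ₗ[F] (leadSupports b L → F) :=
    LinearMap.pi fun S => b.ExteriorAlgebra.coord S ∘ₗ L.subtype
  have hf : Function.Injective f := by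
    rw [injective_iff_map_eq_zero]
    intro x hx
    by_contra hne
    obtain ⟨S, hS⟩ := exists_isLead b (x := (x : ExteriorAlgebra F V)) (by simpa using hne)
    exact hS.1 (congrFun hx ⟨S, (mem_leadSupports b).2 ⟨x, x.2, hS⟩⟩)
  simpa using LinearMap.finrank_le_finrank_of_injective hf

end EKRExterior

open EKRExterior in
/-- Scott–Wilmer exterior-algebra Erdős–Ko–Rado theorem: if `L` is a self-annihilating
subspace of `⋀^k V` with `dim V = n` and `k ≤ n/2`, then `dim L ≤ C(n-1, k-1)`. -/
theorem ekr_exterior (𝔽 : Type*) [Field 𝔽] (hchar : (2 : 𝔽) ≠ 0)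
    (V : Type*) [AddCommGroup V] [Module 𝔽 V] [FiniteDimensional 𝔽 V]
    (n k : ℕ) (hdim : Module.finrank 𝔽 V = n) (hk : 0 < k) (hkn : 2 * k ≤ n)
    (L : Submodule 𝔽 (ExteriorAlgebra 𝔽 V)) (hL : L ≤ ⋀[𝔽]^k V)
    (hann : ∀ x ∈ L, ∀ y ∈ L, x * y = 0) :
    Module.finrank 𝔽 L ≤ (n - 1).choose (k - 1) := by
  let b : Module.Basis (Fin n) 𝔽 V := Module.finBasisOfFinrankEq 𝔽 V hdim
  refine (finrank_le_card_leadSupports b L).trans (erdos_ko_rado ?_ ?_ (by omega))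
  · intro S hS T hT hd
    obtain ⟨x, hxL, hx⟩ := (mem_leadSupports b).1 hS
    obtain ⟨y, hyL, hy⟩ := (mem_leadSupports b).1 hT
    exact repr_mul_lead_ne_zero b hx hy hd (by simp [hann x hxL y hyL])
  · intro S hS
    obtain ⟨x, hxL, hx⟩ := (mem_leadSupports b).1 hS
    exact card_eq_of_repr_ne_zero b (hL hxL) hx.1
end

section
/- Let n and k be positive integers with k ≤ n/2, and let 𝓕 be a pairwise-intersecting family of k-element subsets of {1,…,n} such that the intersection of all members of 𝓕 is empty. Then |𝓕| ≤ C(n−1, k−1) − C(n−k−1, k−1) + 1. -/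
/-!
The proof follows the shifting argument of Frankl and Füredi, by strong induction on `k`, for
families of `k`-subsets of an arbitrary finite ground set `X` inside a fixed type.

Suppose some `Y ⊆ X` with `#Y = 2 * k` is such that any two members of the family already meet
inside `Y`. Let `𝒜ᵢ` be the set of traces `F ∩ Y` of size `i`. Then `𝒜ᵢ` is intersecting, and
`#𝒜ᵢ ≤ C(2k-1, i-1) - C(k-1, i-1)`, plus one if `i = k`. For `i = k` this holds since `𝒜ₖ` contains
no two complementary sets; for `i < k` it follows from the induction hypothesis if `𝒜ᵢ` is
nontrivial, and otherwise, with `x` common to all of `𝒜ᵢ`, from the fact that every member of `𝒜ᵢ`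
meets a trace of size at most `k` that avoids `x`. A trace of size `i` comes from at most
`C(#X - 2k, k - i)` members, so summing and applying Vandermonde's identity twice gives the bound
(`card_le_of_trace`).

Such a `Y` appears after shifting. Replacing `j ∉ Y` by `i ∈ Y` where possible keeps the number of
sets and the intersection property, and increases `∑ #(F ∩ Y)`; a family stable under these shifts
has pairwise intersecting traces on `Y` (`trace_of_stable`). The one obstruction is that a shift may
make the family trivial, but then every member meets `{i, j}`. In that case all `k`-sets containing
`{i, j}` are added, `Y` is replaced by a `2k`-set containing `{i, j}`, and only shifts fixing `i` and
`j` are used: these keep the family nontrivial, and still make the traces on `Y` intersect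
(`card_le_of_cover`).
-/

namespace HiltonMilner

open Finset

variable {α : Type*} [DecidableEq α]

/-- Any two members of the family (possibly equal) have a common element. -/
def Inter (𝓕 : Finset (Finset α)) : Prop :=
  ∀ F ∈ 𝓕, ∀ G ∈ 𝓕, (F ∩ G).Nonempty

/-- No element of the ambient type lies in every member of the family. In particular the family is
nonempty as soon as the ambient type is. -/
def Nontriv (𝓕 : Finset (Finset α)) : Prop :=
  ∀ x : α, ∃ F ∈ 𝓕, x ∉ F

/-- The conclusion of the Hilton–Milner theorem for `k`-subsets of `X`, with the subtracted binomial
coefficient moved to the left-hand side. -/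
def HM (α : Type*) [DecidableEq α] (k : ℕ) : Prop :=
  ∀ (X : Finset α) (𝓕 : Finset (Finset α)), 0 < k → 2 * k ≤ #X → 𝓕 ⊆ powersetCard k X →
    Inter 𝓕 → Nontriv 𝓕 → #𝓕 + (#X - k - 1).choose (k - 1) ≤ (#X - 1).choose (k - 1) + 1

/-! ### Shifting -/

/-- The action of the `(i, j)`-shift of `𝓖` on a single set: `j` is replaced by `i`, unless this is
impossible or the result already belongs to `𝓖`. -/
def shiftSet (i j : α) (𝓖 : Finset (Finset α)) (F : Finset α) : Finset α :=
  if j ∈ F ∧ i ∉ F ∧ insert i (F.erase j) ∉ 𝓖 then insert i (F.erase j) else F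

/-- The `(i, j)`-shift of a family. -/
def shift (i j : α) (𝓖 : Finset (Finset α)) : Finset (Finset α) :=
  𝓖.image (shiftSet i j 𝓖)

lemma shiftSet_cases (i j : α) (𝓖 : Finset (Finset α)) (F : Finset α) :
    (j ∈ F ∧ i ∉ F ∧ insert i (F.erase j) ∉ 𝓖 ∧ shiftSet i j 𝓖 F = insert i (F.erase j)) ∨
    (¬ (j ∈ F ∧ i ∉ F ∧ insert i (F.erase j) ∉ 𝓖) ∧ shiftSet i j 𝓖 F = F) := by
  unfold shiftSet
  split_ifs with h
  · exact Or.inl ⟨h.1, h.2.1, h.2.2, rfl⟩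
  · exact Or.inr ⟨h, rfl⟩

lemma eq_of_insert_erase {i j : α} {F G : Finset α} (hF : j ∈ F) (hiF : i ∉ F) (hG : j ∈ G)
    (hiG : i ∉ G) (h : insert i (F.erase j) = insert i (G.erase j)) : F = G := by
  ext x
  have := congrArg (x ∈ ·) h
  simp only [mem_insert, mem_erase, eq_iff_iff] at this
  by_cases hx : x = j
  · subst hx; simp [hF, hG]
  · by_cases hx' : x = i
    · subst hx'; simp [hiF, hiG]
    · tauto

lemma shiftSet_injOn (i j : α) (𝓖 : Finset (Finset α)) :
    Set.InjOn (shiftSet i j 𝓖) 𝓖 := by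
  intro F hF G hG h
  have hF : F ∈ 𝓖 := hF
  have hG : G ∈ 𝓖 := hG
  rcases shiftSet_cases i j 𝓖 F with ⟨h1, h2, h3, h4⟩ | ⟨h1, h4⟩ <;>
    rcases shiftSet_cases i j 𝓖 G with ⟨g1, g2, g3, g4⟩ | ⟨g1, g4⟩ <;> rw [h4, g4] at h
  · exact eq_of_insert_erase h1 h2 g1 g2 h
  · exact absurd (h ▸ hG) h3
  · exact absurd (h ▸ hF) g3
  · exact h

lemma card_shift (i j : α) (𝓖 : Finset (Finset α)) : #(shift i j 𝓖) = #𝓖 :=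
  card_image_of_injOn (shiftSet_injOn i j 𝓖)

lemma card_insert_erase {i j : α} {F : Finset α} (hj : j ∈ F) (hi : i ∉ F) :
    #(insert i (F.erase j)) = #F := by
  rw [card_insert_of_notMem (by simp [hi]), card_erase_of_mem hj]
  have := card_pos.2 ⟨j, hj⟩
  omega

lemma insert_erase_mem_powersetCard {i j : α} {k : ℕ} {X F : Finset α} (hi : i ∈ X)
    (hF : F ∈ powersetCard k X) (hj : j ∈ F) (hiF : i ∉ F) :
    insert i (F.erase j) ∈ powersetCard k X := by
  rw [mem_powersetCard] at hF ⊢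
  refine ⟨insert_subset hi ((erase_subset _ _).trans hF.1), ?_⟩
  rw [card_insert_erase hj hiF, hF.2]

lemma shift_subset {i j : α} {k : ℕ} {X : Finset α} {𝓖 : Finset (Finset α)} (hi : i ∈ X)
    (h𝓖 : 𝓖 ⊆ powersetCard k X) : shift i j 𝓖 ⊆ powersetCard k X := by
  intro A hA
  obtain ⟨F, hF, rfl⟩ := mem_image.1 hA
  rcases shiftSet_cases i j 𝓖 F with ⟨h1, h2, -, h4⟩ | ⟨-, h4⟩ <;> rw [h4]
  · exact insert_erase_mem_powersetCard hi (h𝓖 hF) h1 h2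
  · exact h𝓖 hF

/-- A shifted set meets an unshifted one: if the latter, `G`, was not shifted because
`G - j + i ∈ 𝓖`, then `F` meets `G - j + i` in an element other than `i` and `j`. -/
lemma inter_shift_aux {i j : α} {𝓖 : Finset (Finset α)} (h : Inter 𝓖) {F G : Finset α}
    (hF : F ∈ 𝓖) (hG : G ∈ 𝓖) (hi : i ∉ F)
    (hG' : ¬ (j ∈ G ∧ i ∉ G ∧ insert i (G.erase j) ∉ 𝓖)) :
    (insert i (F.erase j) ∩ G).Nonempty := by
  by_cases hiG : i ∈ G
  · exact ⟨i, by simp [hiG]⟩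
  by_cases hjG : j ∈ G
  · obtain ⟨x, hx⟩ := h F hF (insert i (G.erase j)) (by tauto)
    refine ⟨x, ?_⟩
    simp only [mem_inter, mem_insert, mem_erase] at hx ⊢
    have : x ≠ i := fun e => hi (e ▸ hx.1)
    tauto
  · obtain ⟨x, hx⟩ := h F hF G hG
    refine ⟨x, ?_⟩
    simp only [mem_inter, mem_insert, mem_erase] at hx ⊢
    have : x ≠ j := fun e => hjG (e ▸ hx.2)
    tauto

lemma Inter.shift {𝓖 : Finset (Finset α)} (h : Inter 𝓖) (i j : α) : Inter (shift i j 𝓖) := by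
  intro A hA B hB
  obtain ⟨F, hF, rfl⟩ := mem_image.1 hA
  obtain ⟨G, hG, rfl⟩ := mem_image.1 hB
  rcases shiftSet_cases i j 𝓖 F with ⟨h1, h2, h3, h4⟩ | ⟨h1, h4⟩ <;>
    rcases shiftSet_cases i j 𝓖 G with ⟨g1, g2, g3, g4⟩ | ⟨g1, g4⟩ <;> rw [h4, g4]
  · exact ⟨i, by simp⟩
  · exact inter_shift_aux h hF hG h2 g1
  · rw [inter_comm]
    exact inter_shift_aux h hG hF g2 h1
  · exact h F hF G hG

/-- A shift can destroy nontriviality only if every member meets `{i, j}`. -/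
lemma Nontriv.shift {𝓖 : Finset (Finset α)} (h : Nontriv 𝓖) {i j : α}
    (hij : ¬ ∀ F ∈ 𝓖, i ∈ F ∨ j ∈ F) : Nontriv (shift i j 𝓖) := by
  intro x
  by_contra! hx
  have key : ∀ F ∈ 𝓖, x ∈ shiftSet i j 𝓖 F := fun F hF => hx _ (mem_image_of_mem _ hF)
  by_cases hxi : x = i
  · subst hxi
    apply hij
    intro F hF
    have := key F hF
    rcases shiftSet_cases x j 𝓖 F with ⟨h1, -, -, -⟩ | ⟨-, h4⟩
    · exact Or.inr h1
    · rw [h4] at this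
      exact Or.inl this
  · obtain ⟨F, hF, hxF⟩ := h x
    have := key F hF
    rcases shiftSet_cases i j 𝓖 F with ⟨-, -, -, h4⟩ | ⟨-, h4⟩ <;> rw [h4] at this
    · simp [hxi, hxF] at this
    · exact hxF this

lemma sum_trace_shift_lt {i j : α} {Y : Finset α} (hi : i ∈ Y) (hj : j ∉ Y)
    {𝓖 : Finset (Finset α)} {F : Finset α} (hF : F ∈ 𝓖) (hjF : j ∈ F) (hiF : i ∉ F)
    (hF' : insert i (F.erase j) ∉ 𝓖) :
    ∑ G ∈ 𝓖, #(G ∩ Y) < ∑ G ∈ shift i j 𝓖, #(G ∩ Y) := by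
  unfold shift
  rw [sum_image (shiftSet_injOn i j 𝓖)]
  have key : ∀ G : Finset α, i ∉ G → #(G ∩ Y) < #(insert i (G.erase j) ∩ Y) := by
    intro G hiG
    apply card_lt_card
    refine ⟨?_, fun h => ?_⟩
    · intro x hx
      simp only [mem_inter, mem_insert, mem_erase] at hx ⊢
      have : x ≠ j := fun e => hj (e ▸ hx.2)
      tauto
    · have := h (show i ∈ insert i (G.erase j) ∩ Y by simp [hi])
      exact hiG (mem_inter.1 this).1
  apply sum_lt_sum
  · intro G _
    rcases shiftSet_cases i j 𝓖 G with ⟨-, h2, -, h4⟩ | ⟨-, h4⟩ <;> rw [h4]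
    exact (key G h2).le
  · refine ⟨F, hF, ?_⟩
    rw [shiftSet, if_pos ⟨hjF, hiF, hF'⟩]
    exact key F hiF

/-- Among the families of the size of `𝓕` with property `P`, one maximising `∑ #(F ∩ Y)` is stable
under every shift into `Y` that preserves `P`. -/
lemma exists_stable {X Y : Finset α} (hYX : Y ⊆ X) {k : ℕ} (P : Finset (Finset α) → Prop)
    {𝓕 : Finset (Finset α)} (h𝓕 : 𝓕 ⊆ powersetCard k X) (hP : P 𝓕) :
    ∃ 𝓖 ⊆ powersetCard k X, P 𝓖 ∧ #𝓖 = #𝓕 ∧ ∀ i ∈ Y, ∀ j, j ∉ Y → P (shift i j 𝓖) →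
      ∀ F ∈ 𝓖, j ∈ F → i ∉ F → insert i (F.erase j) ∈ 𝓖 := by
  classical
  obtain ⟨𝓖, h𝓖, hmax⟩ := exists_max_image
    ((powersetCard k X).powerset.filter fun 𝓖 => P 𝓖 ∧ #𝓖 = #𝓕)
    (fun 𝓖 => ∑ G ∈ 𝓖, #(G ∩ Y)) ⟨𝓕, by simp [h𝓕, hP]⟩
  simp only [mem_filter, mem_powerset] at h𝓖 hmax
  refine ⟨𝓖, h𝓖.1, h𝓖.2.1, h𝓖.2.2, fun i hi j hj hPs F hF hjF hiF => ?_⟩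
  by_contra hF'
  refine absurd (hmax (shift i j 𝓖) ⟨shift_subset (hYX hi) h𝓖.1, hPs, ?_⟩) (not_le.2 ?_)
  · rw [card_shift, h𝓖.2.2]
  · exact sum_trace_shift_lt hi hj hF hjF hiF hF'

/-- Stability under shifts into `Y \ T` makes the traces on `Y` intersect, provided that `T` is
covered by any two members with disjoint traces. -/
lemma trace_of_stable {k : ℕ} {Y T : Finset α} (hY : #Y = 2 * k) {𝓖 : Finset (Finset α)}
    (hcard : ∀ F ∈ 𝓖, #F = k) (hint : Inter 𝓖)
    (hT : ∀ F ∈ 𝓖, ∀ G ∈ 𝓖, ¬ (F ∩ G ∩ Y).Nonempty → T ⊆ F ∪ G)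
    (hst : ∀ i ∈ Y, i ∉ T → ∀ j, j ∉ Y → ∀ F ∈ 𝓖, j ∈ F → i ∉ F → insert i (F.erase j) ∈ 𝓖) :
    ∀ F ∈ 𝓖, ∀ G ∈ 𝓖, (F ∩ G ∩ Y).Nonempty := by
  -- Induction on `#(F ∩ G)`: a shift of `F` removes a common element outside `Y`.
  suffices H : ∀ m : ℕ, ∀ F ∈ 𝓖, ∀ G ∈ 𝓖, #(F ∩ G) ≤ m → (F ∩ G ∩ Y).Nonempty from
    fun F hF G hG => H _ F hF G hG le_rfl
  intro m
  induction m with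
  | zero =>
    intro F hF G hG h
    have := card_pos.2 (hint F hF G hG)
    omega
  | succ m ih =>
    intro F hF G hG h
    by_contra hne
    obtain ⟨j, hj⟩ := hint F hF G hG
    have hjY : j ∉ Y := fun hjY => hne ⟨j, mem_inter.2 ⟨hj, hjY⟩⟩
    have hjFG := mem_inter.1 hj
    have hex : ∃ i ∈ Y, i ∉ F ∪ G := by
      by_contra! hsub
      have h1 : Y ⊆ F.erase j ∪ G.erase j := by
        intro x hx
        have hxj : x ≠ j := fun e => hjY (e ▸ hx)
        have := hsub x hx
        simp only [mem_union, mem_erase] at this ⊢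
        tauto
      have h2 := (card_le_card h1).trans (card_union_le _ _)
      rw [card_erase_of_mem hjFG.1, card_erase_of_mem hjFG.2, hcard F hF, hcard G hG] at h2
      have h3 := card_pos.2 ⟨j, hjFG.1⟩
      rw [hcard F hF] at h3
      omega
    obtain ⟨i, hiY, hi⟩ := hex
    have hiT : i ∉ T := fun h => hi (hT F hF G hG hne h)
    simp only [mem_union, not_or] at hi
    have hF' := hst i hiY hiT j hjY F hF hjFG.1 hi.1
    have hsub : insert i (F.erase j) ∩ G ⊆ (F ∩ G).erase j := by
      intro x hx
      simp only [mem_inter, mem_insert, mem_erase] at hx ⊢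
      have : x ≠ i := fun e => hi.2 (e ▸ hx.2)
      tauto
    have hc := card_le_card hsub
    rw [card_erase_of_mem hj] at hc
    obtain ⟨x, hx⟩ := ih _ hF' G hG (by omega)
    rw [mem_inter] at hx
    exact hne ⟨x, mem_inter.2 ⟨(mem_erase.1 (hsub hx.1)).2, hx.2⟩⟩

/-! ### Counting traces -/

lemma two_le_of_nontriv {k : ℕ} {𝓕 : Finset (Finset α)} [Nonempty α] (hcard : ∀ F ∈ 𝓕, #F = k)
    (hint : Inter 𝓕) (hnt : Nontriv 𝓕) : 2 ≤ k := by
  obtain ⟨F, hF, -⟩ := hnt (Classical.arbitrary α)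
  have h0 : 0 < #F := by simpa using hint F hF F hF
  by_contra hk
  have h1 : #F = 1 := by have := hcard F hF; omega
  obtain ⟨x, rfl⟩ := card_eq_one.1 h1
  obtain ⟨G, hG, hxG⟩ := hnt x
  obtain ⟨y, hy⟩ := hint _ hF G hG
  simp only [mem_inter, mem_singleton] at hy
  exact hxG (hy.1 ▸ hy.2)

/-- An intersecting family of `k`-subsets of a `2k`-set contains no two complementary sets. -/
lemma card_le_half {k : ℕ} (hk : 0 < k) {Y : Finset α} (hY : #Y = 2 * k) {𝒜 : Finset (Finset α)}
    (h𝒜 : 𝒜 ⊆ powersetCard k Y) (hint : Inter 𝒜) : #𝒜 ≤ (2 * k - 1).choose (k - 1) := by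
  have hinj : Set.InjOn (fun A => Y \ A) (𝒜 : Set (Finset α)) := by
    intro A hA B hB h
    have hA' := (mem_powersetCard.1 (h𝒜 hA)).1
    have hB' := (mem_powersetCard.1 (h𝒜 hB)).1
    have h : Y \ A = Y \ B := h
    rw [← Finset.sdiff_sdiff_eq_self hA', h, Finset.sdiff_sdiff_eq_self hB']
  have hdisj : Disjoint 𝒜 (𝒜.image fun A => Y \ A) := by
    rw [disjoint_left]
    intro A hA hA'
    obtain ⟨B, hB, rfl⟩ := mem_image.1 hA'
    obtain ⟨x, hx⟩ := hint _ hA B hB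
    simp at hx
  have hsub : 𝒜 ∪ (𝒜.image fun A => Y \ A) ⊆ powersetCard k Y := by
    refine union_subset h𝒜 fun A hA => ?_
    obtain ⟨B, hB, rfl⟩ := mem_image.1 hA
    have hB' := mem_powersetCard.1 (h𝒜 hB)
    rw [mem_powersetCard]
    refine ⟨sdiff_subset, ?_⟩
    rw [card_sdiff_of_subset hB'.1, hY, hB'.2]
    omega
  have h := card_le_card hsub
  rw [card_union_of_disjoint hdisj, card_image_of_injOn hinj, card_powersetCard, hY] at h
  obtain ⟨k, rfl⟩ : ∃ m, k = m + 1 := ⟨k - 1, by omega⟩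
  have e : 2 * (k + 1) = (2 * k + 1) + 1 := by ring
  have hs : (2 * k + 1).choose (k + 1) = (2 * k + 1).choose k :=
    Nat.choose_symm_of_eq_add (by omega)
  rw [e, Nat.choose_succ_succ, hs] at h
  have e2 : 2 * (k + 1) - 1 = 2 * k + 1 := by omega
  rw [e2, Nat.add_sub_cancel]
  omega

/-- A family of `i`-sets through `x` all meeting a fixed set `B` that avoids `x`. -/
lemma card_le_of_trivial {i : ℕ} {Y B : Finset α} {x : α} (hx : x ∈ Y) (hxB : x ∉ B)
    (hBY : B ⊆ Y) {𝒜 : Finset (Finset α)} (h𝒜 : 𝒜 ⊆ powersetCard i Y) (hx𝒜 : ∀ A ∈ 𝒜, x ∈ A)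
    (hB : ∀ A ∈ 𝒜, (A ∩ B).Nonempty) :
    #𝒜 + (#Y - 1 - #B).choose (i - 1) ≤ (#Y - 1).choose (i - 1) := by
  have hBY' : B ⊆ Y.erase x := fun y hy => mem_erase.2 ⟨fun e => hxB (e ▸ hy), hBY hy⟩
  have hinj : Set.InjOn (fun A => A.erase x) (𝒜 : Set (Finset α)) := by
    intro A hA A' hA' h
    have h : A.erase x = A'.erase x := h
    rw [← insert_erase (hx𝒜 A hA), h, insert_erase (hx𝒜 A' hA')]
  have hdisj : Disjoint (𝒜.image fun A => A.erase x) (powersetCard (i - 1) (Y.erase x \ B)) := by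
    rw [disjoint_left]
    intro A' hA' hA''
    obtain ⟨A, hA, rfl⟩ := mem_image.1 hA'
    obtain ⟨y, hy⟩ := hB A hA
    rw [mem_inter] at hy
    have := (mem_powersetCard.1 hA'').1 (mem_erase.2 ⟨fun e => hxB (e ▸ hy.2), hy.1⟩)
    exact (mem_sdiff.1 this).2 hy.2
  have hsub : (𝒜.image fun A => A.erase x) ∪ powersetCard (i - 1) (Y.erase x \ B)
      ⊆ powersetCard (i - 1) (Y.erase x) := by
    refine union_subset (fun A' hA' => ?_) (powersetCard_mono sdiff_subset)
    obtain ⟨A, hA, rfl⟩ := mem_image.1 hA'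
    have h := mem_powersetCard.1 (h𝒜 hA)
    rw [mem_powersetCard, card_erase_of_mem (hx𝒜 A hA), h.2]
    exact ⟨erase_subset_erase _ h.1, rfl⟩
  have h := card_le_card hsub
  rwa [card_union_of_disjoint hdisj, card_image_of_injOn hinj, card_powersetCard,
    card_powersetCard, card_sdiff_of_subset hBY', card_erase_of_mem hx] at h

/-- The bound on the number of traces of size `i`. Here `𝒯` is the set of all traces. -/
lemma card_level_le {k i : ℕ} (hi : 0 < i) (hik : i ≤ k) (IH : ∀ m < k, HM α m) {Y : Finset α}
    (hY : #Y = 2 * k) {𝒯 : Finset (Finset α)} (hsub : ∀ A ∈ 𝒯, A ⊆ Y) (hle : ∀ A ∈ 𝒯, #A ≤ k)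
    (hint : Inter 𝒯) (hnt : Nontriv 𝒯) :
    #(𝒯.filter fun A => #A = i) + (k - 1).choose (i - 1)
      ≤ (2 * k - 1).choose (i - 1) + if i = k then 1 else 0 := by
  set 𝒜 := 𝒯.filter fun A => #A = i with h𝒜
  have h𝒜Y : 𝒜 ⊆ powersetCard i Y := fun A hA => by
    rw [h𝒜, mem_filter] at hA
    exact mem_powersetCard.2 ⟨hsub A hA.1, hA.2⟩
  have hint𝒜 : Inter 𝒜 := fun A hA B hB => hint A (mem_filter.1 hA).1 B (mem_filter.1 hB).1
  rcases eq_or_lt_of_le hik with rfl | hlt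
  · have := card_le_half hi hY h𝒜Y hint𝒜
    simp only [Nat.choose_self, if_true]
    omega
  rw [if_neg hlt.ne, add_zero]
  rcases 𝒜.eq_empty_or_nonempty with he | ⟨A₀, hA₀⟩
  · rw [he, card_empty, zero_add]
    exact Nat.choose_le_choose _ (by omega)
  by_cases hnt𝒜 : Nontriv 𝒜
  · have : Nonempty α := by
      obtain ⟨y, -⟩ := hint𝒜 _ hA₀ _ hA₀
      exact ⟨y⟩
    have h2 : 2 ≤ i := two_le_of_nontriv (fun A hA => (mem_filter.1 hA).2) hint𝒜 hnt𝒜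
    have h := IH i hlt Y 𝒜 hi (by omega) h𝒜Y hint𝒜 hnt𝒜
    rw [hY] at h
    -- By Pascal's rule `C(k-1, i-1) < C(k, i-1)`, and `k ≤ 2k - i - 1`.
    have hp : k.choose (i - 1) = (k - 1).choose (i - 2) + (k - 1).choose (i - 1) := by
      obtain ⟨k, rfl⟩ : ∃ m, k = m + 1 := ⟨k - 1, by omega⟩
      obtain ⟨i, rfl⟩ : ∃ m, i = m + 2 := ⟨i - 2, by omega⟩
      exact Nat.choose_succ_succ k i
    have hpos : 0 < (k - 1).choose (i - 2) := Nat.choose_pos (by omega)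
    have hmono : k.choose (i - 1) ≤ (2 * k - i - 1).choose (i - 1) :=
      Nat.choose_le_choose _ (by omega)
    omega
  · unfold Nontriv at hnt𝒜
    push Not at hnt𝒜
    obtain ⟨x, hx⟩ := hnt𝒜
    obtain ⟨B, hB, hxB⟩ := hnt x
    have hxY : x ∈ Y := (mem_powersetCard.1 (h𝒜Y hA₀)).1 (hx A₀ hA₀)
    have h := card_le_of_trivial hxY hxB (hsub B hB) h𝒜Y hx
      (fun A hA => hint A (mem_filter.1 hA).1 B hB)
    rw [hY] at h
    have hmono : (k - 1).choose (i - 1) ≤ (2 * k - 1 - #B).choose (i - 1) :=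
      Nat.choose_le_choose _ (by have := hle B hB; omega)
    omega

/-- A family of `k`-sets is counted through its traces `A` on `Y`, each of which extends in at most
`C(#X - #Y, k - #A)` ways. -/
lemma card_le_sum_trace {k : ℕ} {X Y : Finset α} (hYX : Y ⊆ X) {𝓕 : Finset (Finset α)}
    (h𝓕 : 𝓕 ⊆ powersetCard k X) :
    #𝓕 ≤ ∑ A ∈ 𝓕.image (· ∩ Y), (#X - #Y).choose (k - #A) := by
  rw [card_eq_sum_card_image (· ∩ Y) 𝓕]
  apply sum_le_sum
  intro A _
  rw [← card_sdiff_of_subset hYX, ← card_powersetCard]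
  refine card_le_card_of_injOn (fun F => F \ Y) ?_ ?_
  · intro F hF
    obtain ⟨hF', rfl⟩ := mem_filter.1 hF
    have h := mem_powersetCard.1 (h𝓕 hF')
    refine mem_coe.2 (mem_powersetCard.2 ⟨sdiff_subset_sdiff h.1 le_rfl, ?_⟩)
    have := card_sdiff_add_card_inter F Y
    have h2 := h.2
    show #(F \ Y) = k - #(F ∩ Y)
    omega
  · intro F hF G hG h
    have hF := (mem_filter.1 hF).2
    have hG := (mem_filter.1 hG).2
    have h : F \ Y = G \ Y := h
    rw [← sdiff_union_inter F Y, h, hF, ← hG, sdiff_union_inter]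

lemma vandermonde (a b k : ℕ) (hk : 0 < k) :
    ∑ j ∈ range k, a.choose j * b.choose (k - 1 - j) = (a + b).choose (k - 1) := by
  rw [Nat.add_choose_eq, Nat.sum_antidiagonal_eq_sum_range_succ_mk]
  congr 2
  omega

/-- The Hilton–Milner bound for families whose members pairwise meet inside a `2k`-set `Y`. -/
lemma card_le_of_trace {k : ℕ} (hk : 0 < k) (IH : ∀ m < k, HM α m) {X Y : Finset α} (hYX : Y ⊆ X)
    (hY : #Y = 2 * k) {𝓕 : Finset (Finset α)} (h𝓕 : 𝓕 ⊆ powersetCard k X) (hnt : Nontriv 𝓕)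
    (hint : ∀ F ∈ 𝓕, ∀ G ∈ 𝓕, (F ∩ G ∩ Y).Nonempty) :
    #𝓕 + (#X - k - 1).choose (k - 1) ≤ (#X - 1).choose (k - 1) + 1 := by
  have hX := card_le_card hYX
  set 𝒯 := 𝓕.image (· ∩ Y) with h𝒯
  have hsub : ∀ A ∈ 𝒯, A ⊆ Y := by
    intro A hA
    obtain ⟨F, -, rfl⟩ := mem_image.1 hA
    exact inter_subset_right
  have hle : ∀ A ∈ 𝒯, #A ≤ k := by
    intro A hA
    obtain ⟨F, hF, rfl⟩ := mem_image.1 hA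
    rw [← (mem_powersetCard.1 (h𝓕 hF)).2]
    exact card_le_card inter_subset_left
  have hint𝒯 : Inter 𝒯 := by
    intro A hA B hB
    obtain ⟨F, hF, rfl⟩ := mem_image.1 hA
    obtain ⟨G, hG, rfl⟩ := mem_image.1 hB
    rw [← inter_inter_distrib_right]
    exact hint F hF G hG
  have hnt𝒯 : Nontriv 𝒯 := by
    intro x
    obtain ⟨F, hF, hx⟩ := hnt x
    exact ⟨_, mem_image_of_mem _ hF, fun h => hx (mem_inter.1 h).1⟩
  have hpos : ∀ A ∈ 𝒯, 0 < #A := fun A hA => by simpa using hint𝒯 A hA A hA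
  have h1 := card_le_sum_trace hYX h𝓕
  rw [← h𝒯, hY] at h1
  -- Group the traces by `j = #A - 1`, the lower index in Vandermonde's identity.
  have h2 : ∑ A ∈ 𝒯, (#X - 2 * k).choose (k - #A) =
      ∑ j ∈ range k, #(𝒯.filter fun A => #A = j + 1) * (#X - 2 * k).choose (k - 1 - j) := by
    rw [← sum_fiberwise_of_maps_to (g := fun A => #A - 1) (t := range k)]
    · refine sum_congr rfl fun j _ => ?_
      have hf : (𝒯.filter fun A => #A - 1 = j) = 𝒯.filter fun A => #A = j + 1 := by
        refine filter_congr fun A hA => ?_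
        have := hpos A hA
        omega
      rw [hf]
      refine sum_const_nat fun A hA => ?_
      rw [(mem_filter.1 hA).2]
      congr 1
      omega
    · intro A hA
      have := hpos A hA
      have := hle A hA
      rw [mem_range]
      omega
  have h3 : ∑ j ∈ range k, (#(𝒯.filter fun A => #A = j + 1) + (k - 1).choose j)
        * (#X - 2 * k).choose (k - 1 - j)
      ≤ ∑ j ∈ range k, ((2 * k - 1).choose j + if j + 1 = k then 1 else 0)
        * (#X - 2 * k).choose (k - 1 - j) := by
    refine sum_le_sum fun j hj => Nat.mul_le_mul_right _ ?_
    have hj := mem_range.1 hj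
    simpa using card_level_le (Nat.succ_pos j) hj IH hY hsub hle hint𝒯 hnt𝒯
  simp only [add_mul, sum_add_distrib] at h3
  rw [vandermonde _ _ _ hk, vandermonde _ _ _ hk, ← h2] at h3
  have h4 : ∑ j ∈ range k, (if j + 1 = k then 1 else 0) * (#X - 2 * k).choose (k - 1 - j) = 1 := by
    rw [sum_eq_single (k - 1)]
    · rw [if_pos (by omega)]
      simp
    · intro j _ hj
      rw [if_neg (by omega), zero_mul]
    · intro h
      exact absurd (mem_range.2 (by omega)) h
  have e1 : k - 1 + (#X - 2 * k) = #X - k - 1 := by omega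
  have e2 : 2 * k - 1 + (#X - 2 * k) = #X - 1 := by omega
  rw [h4, e1, e2] at h3
  omega

/-! ### Families in which every member meets a fixed pair -/

/-- The Hilton–Milner bound when every member meets `{a, b}`. -/
lemma card_le_of_cover {k : ℕ} (hk : 2 ≤ k) (IH : ∀ m < k, HM α m) {X : Finset α}
    (hX : 2 * k ≤ #X) {a b : α} (hab : a ≠ b) (ha : a ∈ X) (hb : b ∈ X) {𝓕 : Finset (Finset α)}
    (h𝓕 : 𝓕 ⊆ powersetCard k X) (hint : Inter 𝓕) (hnt : Nontriv 𝓕)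
    (hcov : ∀ F ∈ 𝓕, a ∈ F ∨ b ∈ F) :
    #𝓕 + (#X - k - 1).choose (k - 1) ≤ (#X - 1).choose (k - 1) + 1 := by
  have habX : ({a, b} : Finset α) ⊆ X := by
    intro x hx
    rcases mem_insert.1 hx with rfl | hx
    · exact ha
    · exact mem_singleton.1 hx ▸ hb
  have hc2 : #({a, b} : Finset α) = 2 := card_pair hab
  obtain ⟨Y, habY, hYX, hY⟩ := exists_subsuperset_card_eq habX (n := 2 * k) (by omega) hX
  have haY : a ∈ Y := habY (by simp)
  have hbY : b ∈ Y := habY (by simp)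
  -- Containing all `k`-sets through `{a, b}` is what keeps the family nontrivial under shifts.
  let P : Finset (Finset α) → Prop := fun 𝓖 => Inter 𝓖 ∧ (∀ F ∈ 𝓖, a ∈ F ∨ b ∈ F) ∧
    (∃ F ∈ 𝓖, a ∉ F) ∧ (∃ F ∈ 𝓖, b ∉ F) ∧ ∀ F ∈ powersetCard k X, a ∈ F → b ∈ F → F ∈ 𝓖
  set 𝓕' := 𝓕 ∪ (powersetCard k X).filter (fun F => a ∈ F ∧ b ∈ F) with h𝓕'
  have h𝓕'X : 𝓕' ⊆ powersetCard k X := union_subset h𝓕 (filter_subset _ _)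
  have hP : P 𝓕' := by
    have hmem : ∀ F, F ∈ 𝓕' ↔ F ∈ 𝓕 ∨ (F ∈ powersetCard k X ∧ a ∈ F ∧ b ∈ F) := by
      intro F
      rw [h𝓕', mem_union, mem_filter]
    have hc : ∀ F ∈ 𝓕', a ∈ F ∨ b ∈ F := by
      intro F hF
      rcases (hmem F).1 hF with h | h
      · exact hcov F h
      · exact Or.inl h.2.1
    refine ⟨?_, hc, ?_, ?_, fun F hF h1 h2 => (hmem F).2 (Or.inr ⟨hF, h1, h2⟩)⟩
    · intro F hF G hG
      rcases (hmem F).1 hF with h | h <;> rcases (hmem G).1 hG with g | g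
      · exact hint F h G g
      · rcases hc F hF with h' | h'
        · exact ⟨a, mem_inter.2 ⟨h', g.2.1⟩⟩
        · exact ⟨b, mem_inter.2 ⟨h', g.2.2⟩⟩
      · rcases hc G hG with h' | h'
        · exact ⟨a, mem_inter.2 ⟨h.2.1, h'⟩⟩
        · exact ⟨b, mem_inter.2 ⟨h.2.2, h'⟩⟩
      · exact ⟨a, mem_inter.2 ⟨h.2.1, g.2.1⟩⟩
    · obtain ⟨F, hF, h⟩ := hnt a
      exact ⟨F, (hmem F).2 (Or.inl hF), h⟩
    · obtain ⟨F, hF, h⟩ := hnt b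
      exact ⟨F, (hmem F).2 (Or.inl hF), h⟩
  have hle : #𝓕 ≤ #𝓕' := card_le_card subset_union_left
  obtain ⟨𝓖, h𝓖X, ⟨hint𝓖, hc𝓖, ha𝓖, hb𝓖, hall⟩, hcard, hst⟩ := exists_stable hYX P h𝓕'X hP
  have hnt𝓖 : Nontriv 𝓖 := by
    intro x
    by_cases hxa : x = a
    · exact hxa ▸ ha𝓖
    by_cases hxb : x = b
    · exact hxb ▸ hb𝓖
    have h1 : ({a, b} : Finset α) ⊆ X.erase x := by
      intro y hy
      refine mem_erase.2 ⟨?_, habX hy⟩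
      rintro rfl
      simp [hxa, hxb] at hy
    have h2 : #X - 1 ≤ #(X.erase x) := pred_card_le_card_erase
    obtain ⟨F, hF1, hF2, hF3⟩ := exists_subsuperset_card_eq h1 (n := k) (by omega) (by omega)
    refine ⟨F, hall F (mem_powersetCard.2 ⟨hF2.trans (erase_subset _ _), hF3⟩)
      (hF1 (by simp)) (hF1 (by simp)), fun h => ?_⟩
    exact (mem_erase.1 (hF2 h)).1 rfl
  have hPs : ∀ i ∈ Y, i ∉ ({a, b} : Finset α) → ∀ j, j ∉ Y → P (shift i j 𝓖) := by
    intro i hi hiab j hj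
    simp only [mem_insert, mem_singleton, not_or] at hiab
    have hja : a ≠ j := fun e => hj (e ▸ haY)
    have hjb : b ≠ j := fun e => hj (e ▸ hbY)
    have hfix : ∀ F : Finset α, ∀ c, c ≠ i → c ≠ j → (c ∈ shiftSet i j 𝓖 F ↔ c ∈ F) := by
      intro F c hci hcj
      rcases shiftSet_cases i j 𝓖 F with ⟨-, -, -, h⟩ | ⟨-, h⟩ <;> rw [h]
      simp [hci, hcj]
    have hfa := fun F => hfix F a (Ne.symm hiab.1) hja
    have hfb := fun F => hfix F b (Ne.symm hiab.2) hjb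
    refine ⟨hint𝓖.shift i j, ?_, ?_, ?_, ?_⟩
    · intro A hA
      obtain ⟨F, hF, rfl⟩ := mem_image.1 hA
      rw [hfa, hfb]
      exact hc𝓖 F hF
    · obtain ⟨F, hF, h⟩ := ha𝓖
      exact ⟨_, mem_image_of_mem _ hF, by rwa [hfa]⟩
    · obtain ⟨F, hF, h⟩ := hb𝓖
      exact ⟨_, mem_image_of_mem _ hF, by rwa [hfb]⟩
    · intro F hF h1 h2
      refine mem_image.2 ⟨F, hall F hF h1 h2, ?_⟩
      rcases shiftSet_cases i j 𝓖 F with ⟨g1, g2, g3, -⟩ | ⟨-, h⟩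
      · refine absurd (hall _ (insert_erase_mem_powersetCard (hYX hi) hF g1 g2) ?_ ?_) g3
        · simp [hja, h1]
        · simp [hjb, h2]
      · exact h
  have htr := trace_of_stable (T := {a, b}) hY
    (fun F hF => (mem_powersetCard.1 (h𝓖X hF)).2) hint𝓖 ?_
    (fun i hi hiT j hj => hst i hi j hj (hPs i hi hiT j hj))
  · have := card_le_of_trace (by omega) IH hYX hY h𝓖X hnt𝓖 htr
    omega
  · -- Members with disjoint traces contain different elements of the pair, hence cover it.
    intro F hF G hG hne
    have hna : ¬ (a ∈ F ∧ a ∈ G) := fun h => hne ⟨a, by simp [h.1, h.2, haY]⟩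
    have hnb : ¬ (b ∈ F ∧ b ∈ G) := fun h => hne ⟨b, by simp [h.1, h.2, hbY]⟩
    have h1 := hc𝓖 F hF
    have h2 := hc𝓖 G hG
    intro x hx
    rw [mem_union]
    rcases mem_insert.1 hx with rfl | hx
    · tauto
    · rw [mem_singleton.1 hx]
      tauto

/-! ### The general case -/

lemma hm_step {k : ℕ} (IH : ∀ m < k, HM α m) : HM α k := by
  intro X 𝓕 hk hX h𝓕 hint hnt
  obtain ⟨Y, hYX, hY⟩ := exists_subset_card_eq hX
  obtain ⟨𝓖, h𝓖X, ⟨hint𝓖, hnt𝓖⟩, hcard, hst⟩ :=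
    exists_stable hYX (fun 𝓖 => Inter 𝓖 ∧ Nontriv 𝓖) h𝓕 ⟨hint, hnt⟩
  have hsz : ∀ F ∈ 𝓖, #F = k := fun F hF => (mem_powersetCard.1 (h𝓖X hF)).2
  rw [← hcard]
  by_cases hcov : ∃ i ∈ Y, ∃ j ∈ X, j ∉ Y ∧ ∀ F ∈ 𝓖, i ∈ F ∨ j ∈ F
  · obtain ⟨i, hi, j, hj, hjY, hcov⟩ := hcov
    have : Nonempty α := ⟨i⟩
    exact card_le_of_cover (two_le_of_nontriv hsz hint𝓖 hnt𝓖) IH hX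
      (ne_of_mem_of_not_mem hi hjY) (hYX hi) hj h𝓖X hint𝓖 hnt𝓖 hcov
  · refine card_le_of_trace hk IH hYX hY h𝓖X hnt𝓖
      (trace_of_stable (T := ∅) hY hsz hint𝓖 (fun _ _ _ _ _ => empty_subset _) ?_)
    intro i hi _ j hj F hF hjF
    have hjX : j ∈ X := (mem_powersetCard.1 (h𝓖X hF)).1 hjF
    exact hst i hi j hj ⟨hint𝓖.shift i j, hnt𝓖.shift fun h => hcov ⟨i, hi, j, hjX, hj, h⟩⟩
      F hF hjF

lemma hm (k : ℕ) : HM α k :=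
  Nat.strong_induction_on k fun _ IH => hm_step IH

end HiltonMilner

/-- Hilton–Milner theorem: a nontrivially pairwise-intersecting family of `k`-element
subsets of `{1,…,n}` with `k ≤ n/2` has at most `C(n-1,k-1) - C(n-k-1,k-1) + 1` members. -/
theorem hilton_milner (n k : ℕ) (hn : 0 < n) (hk : 0 < k) (hkn : 2 * k ≤ n)
    (𝓕 : Finset (Finset (Fin n)))
    (hcard : ∀ F ∈ 𝓕, F.card = k)
    (hint : ∀ F ∈ 𝓕, ∀ G ∈ 𝓕, (F ∩ G).Nonempty)
    (hnontriv : ∀ i : Fin n, ∃ F ∈ 𝓕, i ∉ F) :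
    𝓕.card ≤ (n - 1).choose (k - 1) - (n - k - 1).choose (k - 1) + 1 := by
  have h := HiltonMilner.hm k Finset.univ 𝓕 hk (by simpa using hkn)
    (fun F hF => Finset.mem_powersetCard.2 ⟨Finset.subset_univ _, hcard F hF⟩) hint hnontriv
  rw [Finset.card_univ, Fintype.card_fin] at h
  omega
end

section
/- Let 𝔽 be a field of characteristic different from 2, let V be an n-dimensional 𝔽-vector space, and let k be a positive integer with k ≤ n/2. If L is a subspace of ⋀^k V such that x ∧ y = 0 for all x, y ∈ L, and such that there is no nonzero 1-form v ∈ V with v ∧ x = 0 for all x ∈ L, then dim L ≤ C(n−1, k−1) − C(n−k−1, k−1) + 1. -/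
/-!
The proof is an induction on the dimension in which a vector `e` is chosen and `V` is replaced by
`V / e`. To avoid quotients, one works in the exterior algebra of `V` throughout, modulo a *blade*
`ω` (`IsBlade`), the product of a basis of a subspace `E`: the ideal `ω ∧ ⋀ V` is a copy of the
exterior algebra of `V / E`, and `ω ∧ L` (`lm ω L`) is the image of `L` in it.

For a space `A` of forms of degree `r + 1`, multiplication by `e` splits `dim (ω ∧ A)` into the
dimension of `e ∧ ω ∧ A` and that of the slice of `A` along `e`, of degree `r`
(`IsBlade.finrank_slice`), which matches Pascal's rule for the bounds. The point is that the slice is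
again self-annihilating if `e` is chosen so that multiplication by `e` has maximal rank on `A`. By the
first-order condition at a point of maximal rank (`MaxRank.tangent`), the forms in `A` annihilated by
`e` are mapped by every `f` into `e ∧ A` (`IsGeneric`), and then the product of two slices is
annihilated by all of `V`, so it vanishes below the top degree (`IsBlade.slice_mul_slice`).

This gives a bound for pairs `A`, `B` of nonzero mutually annihilating spaces of degree `r` in
dimension `m ≥ 2 r` (`IsBlade.cross`):
`dim A + dim B ≤ C(m, r) - C(m - r, r) + 1`. The induction starts at `m = 2 r`, where it is Poincaré
duality (`IsBlade.finrank_pairing`).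

For the main bound (`IsBlade.hiltonMilner`), the case `n = 2 k` is again duality. If `L` stays
nontrivial modulo some generic `e`, induction bounds `e ∧ L`, and the slice is bounded either by
induction, or, if some `v` annihilates it modulo `e`, by counting forms annihilated by a nonzero form
(`IsBlade.finrank_slice_le`). Otherwise, for each generic `e` there is `w` independent of `e` with
`w ∧ e ∧ L = 0`. Two such planes yield `a`, `b` with `b ∧ a ∧ L = 0` and a form `G` of degree at most
`2` with `G ∧ a ∧ L = 0` and `G ∧ b ∧ a ≠ 0`; then the slice of `L` along `a` and the space `a ∧ L`,
divided by `b`, annihilate each other, and the cross-annihilation bound in dimension `n - 2` applies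
(`IsBlade.finrank_le_of_trivial`).

Maximal rank is a generic condition only over an infinite field. Extending scalars to the algebraic
closure preserves the dimension of `L`, self-annihilation, and nontriviality, and reduces the theorem
to that case.
-/

namespace ExtHM

open ExteriorAlgebra Module

/-! ### Exterior algebra and blades -/

section Basics

variable {F V : Type*} [Field F] [AddCommGroup V] [Module F V]

lemma ι_mem (f : V) : ι F f ∈ ⋀[F]^1 V := by
  rw [exteriorPower, pow_one]; exact ⟨f, rfl⟩

lemma mul_mem' {a b : ℕ} {x y : ExteriorAlgebra F V} (hx : x ∈ ⋀[F]^a V) (hy : y ∈ ⋀[F]^b V) :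
    x * y ∈ ⋀[F]^(a + b) V := by
  rw [exteriorPower, pow_add]; exact Submodule.mul_mem_mul hx hy

lemma ι_mul_mem {b : ℕ} (f : V) {y : ExteriorAlgebra F V} (hy : y ∈ ⋀[F]^b V) :
    ι F f * y ∈ ⋀[F]^(b + 1) V := by
  rw [add_comm]; exact mul_mem' (ι_mem f) hy

lemma mem_zero {x : ExteriorAlgebra F V} (hx : x ∈ ⋀[F]^0 V) :
    ∃ r : F, x = algebraMap F _ r := by
  rw [exteriorPower, pow_zero] at hx
  obtain ⟨r, hr⟩ := Submodule.mem_one.mp hx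
  exact ⟨r, hr.symm⟩

lemma one_mem' : (1 : ExteriorAlgebra F V) ∈ ⋀[F]^0 V := by
  rw [exteriorPower, pow_zero]; exact Submodule.one_le.mp le_rfl

lemma mem_one' {x : ExteriorAlgebra F V} (hx : x ∈ ⋀[F]^1 V) : ∃ v : V, x = ι F v := by
  rw [exteriorPower, pow_one] at hx
  obtain ⟨v, hv⟩ := hx
  exact ⟨v, hv.symm⟩

lemma ι_swap (f g : V) : ι F f * ι F g = -(ι F g * ι F f) :=
  eq_neg_of_add_eq_zero_left (ι_add_mul_swap f g)

lemma ι_comm (f : V) {k : ℕ} {x : ExteriorAlgebra F V} (hx : x ∈ ⋀[F]^k V) :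
    ι F f * x = (-1 : F) ^ k • (x * ι F f) := by
  induction hx using Submodule.pow_induction_on_left' with
  | algebraMap r => simp [Algebra.commutes]
  | add x y i hx hy h1 h2 => rw [mul_add, h1, h2, add_mul, smul_add]
  | mem_mul m hm i x hx ih =>
    obtain ⟨g, rfl⟩ := hm
    rw [← mul_assoc, ι_swap, neg_mul, mul_assoc, ih, pow_succ]
    simp [mul_assoc]

/-- Homogeneous elements of the exterior algebra commute up to a nonzero scalar. -/
lemma exists_comm {a b : ℕ} {x y : ExteriorAlgebra F V} (hx : x ∈ ⋀[F]^a V)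
    (hy : y ∈ ⋀[F]^b V) : ∃ c : F, c ≠ 0 ∧ x * y = c • (y * x) := by
  refine ⟨(-1) ^ (a * b), pow_ne_zero _ (by simp), ?_⟩
  induction hx using Submodule.pow_induction_on_left' with
  | algebraMap r => simp [Algebra.commutes]
  | add x z i hx hz h1 h2 => rw [mul_add, add_mul, h1, h2, smul_add]
  | mem_mul m hm i x hx ih =>
    obtain ⟨g, rfl⟩ := hm
    rw [mul_assoc, ih, mul_smul_comm, ← mul_assoc, ι_comm g hy, smul_mul_assoc, smul_smul,
      mul_assoc, Nat.succ_mul, pow_add]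

/-- Contraction with a linear functional lowers the degree by one. -/
lemma contract_mem (φ : Dual F V) {k : ℕ} {x : ExteriorAlgebra F V} (hx : x ∈ ⋀[F]^(k + 1) V) :
    CliffordAlgebra.contractLeft φ x ∈ ⋀[F]^k V := by
  suffices H : ∀ {n : ℕ} {x : ExteriorAlgebra F V}, x ∈ ⋀[F]^n V → ∀ k, n = k + 1 →
      CliffordAlgebra.contractLeft φ x ∈ ⋀[F]^k V from H hx k rfl
  intro n x hx
  induction hx using Submodule.pow_induction_on_left' with
  | algebraMap r => intro k hk; omega
  | add x z i hx hz h1 h2 =>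
    intro k hk; rw [map_add]; exact add_mem (h1 k hk) (h2 k hk)
  | mem_mul m hm i x hx ih =>
    obtain ⟨g, rfl⟩ := hm
    intro k hk
    obtain rfl : i = k := by omega
    rw [show ι F g = CliffordAlgebra.ι _ g from rfl, CliffordAlgebra.contractLeft_ι_mul]
    refine sub_mem (Submodule.smul_mem _ _ hx) ?_
    rcases i with _ | j
    · obtain ⟨r, rfl⟩ := mem_zero hx
      rw [CliffordAlgebra.contractLeft_algebraMap]
      simp
    · exact ι_mul_mem g (ih j rfl)

lemma contract_zero (φ : Dual F V) {x : ExteriorAlgebra F V} (hx : x ∈ ⋀[F]^0 V) :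
    CliffordAlgebra.contractLeft φ x = 0 := by
  obtain ⟨r, rfl⟩ := mem_zero hx
  exact CliffordAlgebra.contractLeft_algebraMap _ _ _

lemma contract_ι_mul (φ : Dual F V) (a : V) (b : ExteriorAlgebra F V) :
    CliffordAlgebra.contractLeft φ (ι F a * b) =
      φ a • b - ι F a * CliffordAlgebra.contractLeft φ b :=
  CliffordAlgebra.contractLeft_ι_mul φ a b

/-- `ω` is a blade with support `E`: up to a scalar, the product of a basis of the `s`-dimensional
space `E`. It is recorded through the properties that let `ω ∧ ⋀ V` play the role of the exterior
algebra of `V / E`: `E` annihilates `ω`, and functionals vanishing on `E` contract past `ω`. -/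
structure IsBlade (E : Submodule F V) (s : ℕ) (ω : ExteriorAlgebra F V) : Prop where
  finrank_eq : finrank F E = s
  mem : ω ∈ ⋀[F]^s V
  ne : ω ≠ 0
  kill : ∀ f ∈ E, ι F f * ω = 0
  contr : ∀ φ : Dual F V, (∀ f ∈ E, φ f = 0) → ∀ x,
    CliffordAlgebra.contractLeft φ (ω * x) = (-1 : F) ^ s • (ω * CliffordAlgebra.contractLeft φ x)

lemma isBlade_one : IsBlade (⊥ : Submodule F V) 0 1 where
  finrank_eq := finrank_bot F V
  mem := one_mem'
  ne := one_ne_zero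
  kill := by intro f hf; rw [(Submodule.mem_bot F).mp hf]; simp
  contr := by intro φ _ x; simp

lemma exists_functional {E : Submodule F V} {e : V} (he : e ∉ E) :
    ∃ φ : Dual F V, φ e = 1 ∧ ∀ f ∈ E, φ f = 0 := by
  obtain ⟨g, hg, hE⟩ := Submodule.exists_le_ker_of_notMem he
  exact ⟨(g e)⁻¹ • g, by simp [hg], fun f hf => by
    have : g f = 0 := hE hf
    simp [this]⟩

namespace IsBlade

variable {E : Submodule F V} {s : ℕ} {ω : ExteriorAlgebra F V}

/-- Exactness of multiplication by `e` modulo a blade, via contraction with a functional that is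
`1` on `e` and vanishes on the support. -/
lemma exact_aux (h : IsBlade E s ω) {e : V} (he : e ∉ E) :
    ∃ φ : Dual F V, ∀ x, ι F e * ω * x = 0 →
      ω * x = ι F e * ω * ((-1 : F) ^ s • CliffordAlgebra.contractLeft φ x) := by
  obtain ⟨φ, h1, h2⟩ := exists_functional he
  refine ⟨φ, fun x hx => ?_⟩
  have := contract_ι_mul φ e (ω * x)
  rw [← mul_assoc, hx, map_zero, h1, one_smul, h.contr φ h2] at this
  rw [← sub_eq_zero, this, mul_smul_comm, mul_smul_comm, mul_assoc]

/-- Modulo a blade, the complex given by multiplication by a vector outside the support is exact. -/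
lemma exact (h : IsBlade E s ω) {e : V} (he : e ∉ E) {k : ℕ} {x : ExteriorAlgebra F V}
    (hx : x ∈ ⋀[F]^(k + 1) V) (h0 : ι F e * ω * x = 0) :
    ∃ z ∈ ⋀[F]^k V, ω * x = ι F e * ω * z := by
  obtain ⟨φ, hφ⟩ := h.exact_aux he
  exact ⟨_, Submodule.smul_mem _ _ (contract_mem φ hx), hφ x h0⟩

lemma exact_zero (h : IsBlade E s ω) {e : V} (he : e ∉ E) {x : ExteriorAlgebra F V}
    (hx : x ∈ ⋀[F]^0 V) (h0 : ι F e * ω * x = 0) : ω * x = 0 := by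
  obtain ⟨φ, hφ⟩ := h.exact_aux he
  rw [hφ x h0, contract_zero φ hx]; simp

lemma ι_mul_ne (h : IsBlade E s ω) {e : V} (he : e ∉ E) : ι F e * ω ≠ 0 := by
  intro h0
  have := h.exact_zero he one_mem' (by rw [h0, zero_mul])
  exact h.ne (by simpa using this)

lemma notMem_of (h : IsBlade E s ω) {e : V} {x : ExteriorAlgebra F V}
    (hx : ι F e * ω * x ≠ 0) : e ∉ E := fun he => hx (by rw [h.kill e he, zero_mul])

lemma exists_notMem (h : IsBlade E s ω) (hs : s < finrank F V) : ∃ e, e ∉ E := by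
  by_contra! hc
  have : E = ⊤ := by ext x; simp [hc x]
  have h1 := h.finrank_eq
  rw [this, finrank_top] at h1
  omega

variable [FiniteDimensional F V]

/-- The product of a blade with a vector outside its support is again a blade. -/
lemma extend (h : IsBlade E s ω) {e : V} (he : e ∉ E) :
    IsBlade (E ⊔ Submodule.span F {e}) (s + 1) (ι F e * ω) where
  finrank_eq := by
    have h1 := Submodule.finrank_sup_add_finrank_inf_eq E (Submodule.span F {e})
    have h2 : E ⊓ Submodule.span F {e} = ⊥ := by
      rw [eq_bot_iff]
      rintro x ⟨hx, hx2⟩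
      obtain ⟨c, rfl⟩ := Submodule.mem_span_singleton.mp hx2
      by_cases hc : c = 0
      · simp [hc]
      · exact absurd ((Submodule.smul_mem_iff E hc).mp hx) he
    have h3 : e ≠ 0 := fun h0 => he (h0 ▸ E.zero_mem)
    rw [h2, finrank_bot, finrank_span_singleton h3, h.finrank_eq] at h1
    omega
  mem := ι_mul_mem e h.mem
  ne := h.ι_mul_ne he
  kill := by
    intro f hf
    obtain ⟨g, hg, y, hy, rfl⟩ := Submodule.mem_sup.mp hf
    obtain ⟨c, rfl⟩ := Submodule.mem_span_singleton.mp hy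
    rw [map_add, map_smul, add_mul, smul_mul_assoc, ← mul_assoc, ← mul_assoc, ι_sq_zero, zero_mul,
      smul_zero, add_zero, ι_swap, neg_mul, mul_assoc, h.kill g hg, mul_zero, neg_zero]
  contr := by
    intro φ hφ x
    have h1 : φ e = 0 := hφ e (Submodule.mem_sup_right (Submodule.mem_span_singleton_self e))
    rw [mul_assoc, contract_ι_mul, h1, zero_smul, zero_sub,
      h.contr φ (fun f hf => hφ f (Submodule.mem_sup_left hf)), pow_succ, mul_smul_comm,
      ← mul_assoc]
    simp

/-- Below the top degree, an element annihilated by all of `V` modulo a blade vanishes. -/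
lemma eq_zero_of_forall (h : IsBlade E s ω) {d : ℕ} {x : ExteriorAlgebra F V}
    (hx : x ∈ ⋀[F]^d V) (hd : s + d < finrank F V) (h0 : ∀ f, ι F f * ω * x = 0) :
    ω * x = 0 := by
  induction d generalizing E s ω x with
  | zero =>
    obtain ⟨e, he⟩ := h.exists_notMem (by omega)
    exact h.exact_zero he hx (h0 e)
  | succ d ih =>
    obtain ⟨e, he⟩ := h.exists_notMem (by omega)
    obtain ⟨z, hz, hxz⟩ := h.exact he hx (h0 e)
    rw [hxz]
    refine ih (h.extend he) hz (by omega) fun f => ?_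
    rw [mul_assoc, ← hxz, ← mul_assoc, h0]

end IsBlade

end Basics

/-! ### Dimension counts modulo a blade -/

section Counting

variable {F V : Type*} [Field F] [AddCommGroup V] [Module F V]

/-- Left multiplication of a subspace by an element of the exterior algebra. For a blade `ω` with
support `E`, this is the image of `A` in the exterior algebra of `V / E`. -/
abbrev lm (ω : ExteriorAlgebra F V) (A : Submodule F (ExteriorAlgebra F V)) :
    Submodule F (ExteriorAlgebra F V) :=
  A.map (LinearMap.mulLeft F ω)

lemma mem_lm {ω : ExteriorAlgebra F V} {A : Submodule F (ExteriorAlgebra F V)}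
    {y : ExteriorAlgebra F V} : y ∈ lm ω A ↔ ∃ x ∈ A, ω * x = y := by
  simp [lm, Submodule.mem_map]

lemma lm_mem {ω : ExteriorAlgebra F V} {A : Submodule F (ExteriorAlgebra F V)}
    {x : ExteriorAlgebra F V} (hx : x ∈ A) : ω * x ∈ lm ω A := mem_lm.mpr ⟨x, hx, rfl⟩

lemma lm_lm (a b : ExteriorAlgebra F V) (A : Submodule F (ExteriorAlgebra F V)) :
    lm a (lm b A) = lm (a * b) A := by
  rw [lm, lm, lm, ← Submodule.map_comp]
  congr 1
  ext x
  simp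

lemma lm_eq_bot {ω : ExteriorAlgebra F V} {A : Submodule F (ExteriorAlgebra F V)}
    (h : ∀ x ∈ A, ω * x = 0) : lm ω A = ⊥ := by
  rw [eq_bot_iff]
  intro y hy
  obtain ⟨x, hx, rfl⟩ := mem_lm.mp hy
  simp [h x hx]

lemma rank_nullity {M N : Type*} [AddCommGroup M] [Module F M] [AddCommGroup N] [Module F N]
    (X : Submodule F M) [FiniteDimensional F X] (T : M →ₗ[F] N) :
    finrank F (X.map T) + finrank F (X ⊓ LinearMap.ker T : Submodule F M) = finrank F X := by
  have h := (T.domRestrict X).finrank_range_add_finrank_ker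
  rw [LinearMap.range_domRestrict, LinearMap.ker_domRestrict] at h
  rw [← h, (Submodule.equivMapOfInjective X.subtype X.injective_subtype
    (Submodule.comap X.subtype (LinearMap.ker T))).finrank_eq, Submodule.map_comap_subtype]

lemma rank_nullity_lm (a b : ExteriorAlgebra F V) (A : Submodule F (ExteriorAlgebra F V))
    [FiniteDimensional F A] :
    finrank F (lm (a * b) A) + finrank F (lm b A ⊓ LinearMap.ker (LinearMap.mulLeft F a) :
      Submodule F (ExteriorAlgebra F V)) = finrank F (lm b A) := by
  rw [← rank_nullity (lm b A) (LinearMap.mulLeft F a), ← lm_lm]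

lemma finrank_lm_zero_le (ω : ExteriorAlgebra F V) : finrank F (lm ω (⋀[F]^0 V)) ≤ 1 := by
  refine (Submodule.finrank_mono (t := Submodule.span F {ω}) ?_).trans
    ((finrank_span_le_card {ω}).trans (by simp))
  intro y hy
  obtain ⟨x, hx, rfl⟩ := mem_lm.mp hy
  obtain ⟨r, rfl⟩ := mem_zero hx
  refine Submodule.mem_span_singleton.mpr ⟨r, ?_⟩
  rw [← Algebra.commutes, Algebra.smul_def]

variable [FiniteDimensional F V]

lemma fd_of_le {k : ℕ} {A : Submodule F (ExteriorAlgebra F V)} (hA : A ≤ ⋀[F]^k V) :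
    FiniteDimensional F A := Submodule.finiteDimensional_of_le hA

/-- Multiples of a nonzero form of degree `b` by forms of degree `a` make up a space of dimension at
least `C(n - b, a)`. -/
lemma choose_le_finrank_mul {a b c : ℕ} (hn : b + c = finrank F V) {y : ExteriorAlgebra F V}
    (hy : y ∈ ⋀[F]^b V) (hy0 : y ≠ 0) :
    c.choose a ≤ finrank F ((⋀[F]^a V).map (LinearMap.mulRight F y)) := by
  induction c generalizing a b y with
  | zero =>
    rcases a with _ | a
    · rw [Nat.choose_zero_right, Nat.one_le_iff_ne_zero, Ne, Submodule.finrank_eq_zero]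
      intro h
      have : y ∈ (⋀[F]^0 V).map (LinearMap.mulRight F y) := ⟨1, one_mem', by simp⟩
      rw [h] at this
      exact hy0 (by simpa using this)
    · simp
  | succ c ih =>
    rcases a with _ | a
    · rw [Nat.choose_zero_right, Nat.one_le_iff_ne_zero, Ne, Submodule.finrank_eq_zero]
      intro h
      have : y ∈ (⋀[F]^0 V).map (LinearMap.mulRight F y) := ⟨1, one_mem', by simp⟩
      rw [h] at this
      exact hy0 (by simpa using this)
    · obtain ⟨e, he⟩ : ∃ e, ι F e * y ≠ 0 := by
        by_contra! hc
        refine hy0 ?_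
        have := isBlade_one.eq_zero_of_forall hy (by omega) (fun f => by simpa using hc f)
        simpa using this
      have h1 := ih (a := a + 1) (by omega) (ι_mul_mem e hy) he
      have h2 := ih (a := a) (by omega) (ι_mul_mem e hy) he
      have h3 := rank_nullity ((⋀[F]^(a + 1) V).map (LinearMap.mulRight F y))
        (LinearMap.mulLeft F (ι F e))
      have h4 : ((⋀[F]^(a + 1) V).map (LinearMap.mulRight F y)).map (LinearMap.mulLeft F (ι F e))
          = (⋀[F]^(a + 1) V).map (LinearMap.mulRight F (ι F e * y)) := by
        ext w
        simp only [Submodule.mem_map, LinearMap.mulRight_apply, LinearMap.mulLeft_apply]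
        constructor
        · rintro ⟨_, ⟨u, hu, rfl⟩, rfl⟩
          refine ⟨(-1 : F) ^ (a + 1) • u, Submodule.smul_mem _ _ hu, ?_⟩
          rw [← mul_assoc, ← mul_assoc, ι_comm e hu, smul_mul_assoc, smul_mul_assoc]
        · rintro ⟨u, hu, rfl⟩
          refine ⟨_, ⟨(-1 : F) ^ (a + 1) • u, Submodule.smul_mem _ _ hu, rfl⟩, ?_⟩
          rw [smul_mul_assoc, mul_smul_comm, ← mul_assoc, ← mul_assoc, ι_comm e hu,
            smul_mul_assoc, smul_smul, ← mul_pow]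
          simp
      have h5 : (⋀[F]^a V).map (LinearMap.mulRight F (ι F e * y)) ≤
          (⋀[F]^(a + 1) V).map (LinearMap.mulRight F y) ⊓
            LinearMap.ker (LinearMap.mulLeft F (ι F e)) := by
        rintro _ ⟨u, hu, rfl⟩
        refine ⟨⟨u * ι F e, mul_mem' hu (ι_mem e), by simp [mul_assoc]⟩, ?_⟩
        rw [SetLike.mem_coe, LinearMap.mem_ker, LinearMap.mulLeft_apply, LinearMap.mulRight_apply,
          ← mul_assoc, ι_comm e hu, smul_mul_assoc, mul_assoc, ← mul_assoc (ι F e), ι_sq_zero]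
        simp
      rw [h4] at h3
      have : FiniteDimensional F ↥((⋀[F]^(a + 1) V).map (LinearMap.mulRight F y) ⊓
            LinearMap.ker (LinearMap.mulLeft F (ι F e))) :=
        Submodule.finiteDimensional_of_le inf_le_left
      have h6 := Submodule.finrank_mono h5
      rw [Nat.choose_succ_succ']
      omega

namespace IsBlade

variable {E : Submodule F V} {s : ℕ} {ω : ExteriorAlgebra F V}

lemma s_le (h : IsBlade E s ω) : s ≤ finrank F V := by
  rw [← h.finrank_eq]; exact Submodule.finrank_le E

/-- The number `C(n - s, k)` bounds the dimension of the degree `k` part of the exterior algebra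
of `V / E`. -/
lemma finrank_lm_le (h : IsBlade E s ω) {c k : ℕ} (hn : s + c = finrank F V) :
    finrank F (lm ω (⋀[F]^k V)) ≤ c.choose k := by
  induction c generalizing E s ω k with
  | zero =>
    rcases k with _ | k
    · rw [Nat.choose_zero_right]; exact finrank_lm_zero_le ω
    · have hE : E = ⊤ := Submodule.eq_top_of_finrank_eq (by rw [h.finrank_eq]; omega)
      rw [lm_eq_bot]
      · simp
      · intro x hx
        rw [exteriorPower, pow_succ'] at hx
        induction hx using Submodule.mul_induction_on' with
        | mem_mul_mem m hm u hu =>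
          obtain ⟨g, rfl⟩ := hm
          obtain ⟨t, -, ht⟩ := exists_comm h.mem (ι_mem g)
          rw [← mul_assoc, ht, h.kill g (hE ▸ Submodule.mem_top), smul_zero, zero_mul]
        | add x _ y _ h1 h2 => rw [mul_add, h1, h2, add_zero]
  | succ c ih =>
    rcases k with _ | k
    · rw [Nat.choose_zero_right]; exact finrank_lm_zero_le ω
    · obtain ⟨e, he⟩ := h.exists_notMem (by omega)
      have h1 := ih (h.extend he) (k := k + 1) (by omega)
      have h2 := ih (h.extend he) (k := k) (by omega)
      have h3 := rank_nullity_lm (ι F e) ω (⋀[F]^(k + 1) V)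
      have h4 : lm ω (⋀[F]^(k + 1) V) ⊓ LinearMap.ker (LinearMap.mulLeft F (ι F e)) ≤
          lm (ι F e * ω) (⋀[F]^k V) := by
        rintro y ⟨hy, hy0⟩
        obtain ⟨x, hx, rfl⟩ := mem_lm.mp hy
        rw [SetLike.mem_coe, LinearMap.mem_ker, LinearMap.mulLeft_apply, ← mul_assoc] at hy0
        obtain ⟨z, hz, hxz⟩ := h.exact he hx hy0
        rw [hxz]; exact lm_mem hz
      have h6 := Submodule.finrank_mono h4
      rw [Nat.choose_succ_succ']
      omega

/-- Dimension bound for a space of forms annihilated, modulo a blade, by one form `G`. -/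
lemma finrank_lm_add_le (h : IsBlade E s ω) {a c j : ℕ} (hn : s + c = finrank F V)
    {G : ExteriorAlgebra F V} (hG : G ∈ ⋀[F]^j V) (hG0 : G * ω ≠ 0) (hj : j ≤ c)
    {X : Submodule F (ExteriorAlgebra F V)} (hX : X ≤ ⋀[F]^a V)
    (h0 : ∀ x ∈ X, G * ω * x = 0) :
    finrank F (lm ω X) + (c - j).choose a ≤ c.choose a := by
  have h1 := rank_nullity_lm G ω (⋀[F]^a V)
  have h2 := h.finrank_lm_le (k := a) hn
  have h3 := choose_le_finrank_mul (a := a) (b := j + s) (c := c - j) (by omega)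
    (mul_mem' hG h.mem) hG0
  have h4 : (⋀[F]^a V).map (LinearMap.mulRight F (G * ω)) ≤ lm (G * ω) (⋀[F]^a V) := by
    rintro _ ⟨u, hu, rfl⟩
    obtain ⟨t, -, ht⟩ := exists_comm hu (mul_mem' hG h.mem)
    rw [LinearMap.mulRight_apply, ht]
    exact Submodule.smul_mem _ _ (lm_mem hu)
  have h5 : lm ω X ≤ lm ω (⋀[F]^a V) ⊓ LinearMap.ker (LinearMap.mulLeft F G) := by
    intro y hy
    obtain ⟨x, hx, rfl⟩ := mem_lm.mp hy
    refine ⟨lm_mem (hX hx), ?_⟩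
    rw [SetLike.mem_coe, LinearMap.mem_ker, LinearMap.mulLeft_apply, ← mul_assoc, h0 x hx]
  have h6 := Submodule.finrank_mono h4
  have : FiniteDimensional F ↥(lm ω (⋀[F]^a V) ⊓ LinearMap.ker (LinearMap.mulLeft F G)) :=
    Submodule.finiteDimensional_of_le inf_le_left
  have h7 := Submodule.finrank_mono h5
  omega

/-- Poincaré duality modulo a blade: `ω ∧ x` is detected by forms of complementary degree. -/
lemma exists_mul_ne (h : IsBlade E s ω) {a b : ℕ} (hn : s + (a + b) = finrank F V)
    {x : ExteriorAlgebra F V} (hx : x ∈ ⋀[F]^a V) (h0 : ω * x ≠ 0) :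
    ∃ u ∈ ⋀[F]^b V, ω * x * u ≠ 0 := by
  have h3 := choose_le_finrank_mul (a := b) (b := s + a) (c := b) (by omega)
    (mul_mem' h.mem hx) h0
  rw [Nat.choose_self] at h3
  by_contra! hc
  have : (⋀[F]^b V).map (LinearMap.mulRight F (ω * x)) = ⊥ := by
    rw [eq_bot_iff]
    rintro _ ⟨u, hu, rfl⟩
    obtain ⟨t, -, ht⟩ := exists_comm hu (mul_mem' h.mem hx)
    rw [LinearMap.mulRight_apply, ht, hc u hu, smul_zero]
    exact zero_mem _
  rw [this, finrank_bot] at h3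
  omega

/-- In complementary degrees the product pairing is perfect, so two mutually annihilating subspaces
have total dimension at most that of the whole space. -/
lemma finrank_pairing (h : IsBlade E s ω) {r : ℕ} (hn : s + 2 * r = finrank F V)
    {A B : Submodule F (ExteriorAlgebra F V)} (hA : A ≤ ⋀[F]^r V) (hB : B ≤ ⋀[F]^r V)
    (hAB : ∀ x ∈ A, ∀ y ∈ B, ω * x * y = 0) :
    finrank F (lm ω A) + finrank F (lm ω B) ≤ (2 * r).choose r := by
  have hd : finrank F (lm ω (⋀[F]^(2 * r) V)) ≤ 1 := by
    have := h.finrank_lm_le (k := 2 * r) hn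
    rwa [Nat.choose_self] at this
  obtain ⟨l, hl⟩ : ∃ l : Dual F (ExteriorAlgebra F V),
      ∀ y ∈ lm ω (⋀[F]^(2 * r) V), l y = 0 → y = 0 := by
    obtain ⟨v, hv⟩ := finrank_le_one_iff.mp hd
    by_cases hv0 : (v : ExteriorAlgebra F V) = 0
    · refine ⟨0, fun y hy _ => ?_⟩
      obtain ⟨c, hc⟩ := hv ⟨y, hy⟩
      have := congrArg Subtype.val hc
      simpa [hv0] using this.symm
    · obtain ⟨l, hl⟩ := Module.Projective.exists_dual_ne_zero F hv0
      refine ⟨l, fun y hy h0 => ?_⟩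
      obtain ⟨c, hc⟩ := hv ⟨y, hy⟩
      have hc' : c • (v : ExteriorAlgebra F V) = y := congrArg Subtype.val hc
      rw [← hc', map_smul, smul_eq_mul] at h0
      rcases mul_eq_zero.mp h0 with h1 | h1
      · rw [← hc', h1, zero_smul]
      · exact absurd h1 hl
  set M : Submodule F (ExteriorAlgebra F V) := ⋀[F]^r V with hM
  let T : ExteriorAlgebra F V →ₗ[F] Dual F M :=
    { toFun := fun x => l ∘ₗ LinearMap.mulLeft F (ω * x) ∘ₗ M.subtype
      map_add' := fun x y => LinearMap.ext fun z => by simp [mul_add, add_mul, mul_assoc]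
      map_smul' := fun c x => LinearMap.ext fun z => by simp [mul_assoc] }
  have hT : ∀ x (y : M), T x y = l (ω * x * y) := fun x y => rfl
  have hfA : FiniteDimensional F A := fd_of_le hA
  have h1 := rank_nullity A T
  have h2 := rank_nullity A (LinearMap.mulLeft F ω)
  have h3 : A ⊓ LinearMap.ker T ≤ A ⊓ LinearMap.ker (LinearMap.mulLeft F ω) := by
    rintro x ⟨hx, hx0⟩
    refine ⟨hx, ?_⟩
    rw [SetLike.mem_coe, LinearMap.mem_ker, LinearMap.mulLeft_apply]
    by_contra hne
    obtain ⟨u, hu, hu0⟩ := h.exists_mul_ne (a := r) (b := r) (by omega) (hA hx) hne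
    refine hu0 (hl _ ?_ ?_)
    · rw [mul_assoc, two_mul]; exact lm_mem (mul_mem' (hA hx) hu)
    · rw [SetLike.mem_coe, LinearMap.mem_ker] at hx0
      rw [← hT x ⟨u, hu⟩, hx0, LinearMap.zero_apply]
  have : FiniteDimensional F ↥(A ⊓ LinearMap.ker (LinearMap.mulLeft F ω)) :=
    Submodule.finiteDimensional_of_le inf_le_left
  have h4 := Submodule.finrank_mono h3
  set N := M ⊓ LinearMap.ker (LinearMap.mulLeft F ω) with hN
  have hBN : B ⊔ N ≤ M := sup_le hB inf_le_left
  set B' := Submodule.comap M.subtype (B ⊔ N)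
  have h5 : A.map T ≤ B'.dualAnnihilator := by
    rintro _ ⟨x, hx, rfl⟩
    rw [Submodule.mem_dualAnnihilator]
    rintro ⟨y, hy⟩ hyB
    rw [hT]
    obtain ⟨b, hb, z, hz, rfl⟩ := Submodule.mem_sup.mp (show y ∈ B ⊔ N from hyB)
    obtain ⟨t, -, ht⟩ := exists_comm (hA hx) hz.1
    have hz2 : ω * z = 0 := hz.2
    change l (ω * x * (b + z)) = 0
    rw [mul_add, hAB x hx b hb, zero_add, mul_assoc, ht, mul_smul_comm, ← mul_assoc, hz2]
    simp
  have h6 := Submodule.finrank_mono h5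
  have h7 := Subspace.finrank_add_finrank_dualAnnihilator_eq B'
  have h8 : finrank F B' = finrank F ↥(B ⊔ N) := by
    rw [(Submodule.equivMapOfInjective M.subtype M.injective_subtype B').finrank_eq,
      Submodule.map_comap_subtype, inf_eq_right.mpr hBN]
  have hfB : FiniteDimensional F ↥(B ⊔ N) := fd_of_le hBN
  have h9 := rank_nullity (B ⊔ N) (LinearMap.mulLeft F ω)
  have h10 : finrank F (lm ω M) + finrank F N = finrank F M :=
    rank_nullity M (LinearMap.mulLeft F ω)
  have h11 : (B ⊔ N) ⊓ LinearMap.ker (LinearMap.mulLeft F ω) = N :=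
    le_antisymm (inf_le_inf_right _ hBN) (le_inf le_sup_right inf_le_right)
  have h12 : (B ⊔ N).map (LinearMap.mulLeft F ω) = lm ω B := by
    rw [Submodule.map_sup]
    refine sup_eq_left.mpr ?_
    rintro _ ⟨x, hx, rfl⟩
    have : ω * x = 0 := hx.2
    rw [LinearMap.mulLeft_apply, this]; exact zero_mem _
  have h13 : finrank F (lm ω M) ≤ (2 * r).choose r := h.finrank_lm_le (k := r) hn
  rw [h11, h12] at h9
  change finrank F (lm ω A) + _ = _ at h2
  omega

end IsBlade

end Counting

/-! ### Generic vectors -/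

section Generic

variable {F V : Type*} [Field F] [AddCommGroup V] [Module F V]

/-- Linear independence is an open condition along an affine line. -/
lemma exists_linearIndependent_add_smul [Infinite F] {Y ι : Type*} [AddCommGroup Y] [Module F Y]
    [Fintype ι] {v : ι → Y} (w : ι → Y) (hv : LinearIndependent F v) :
    ∃ t : F, t ≠ 0 ∧ LinearIndependent F (fun i => v i + t • w i) := by
  classical
  have hinj : LinearMap.ker (Fintype.linearCombination F v) = ⊥ :=
    LinearMap.ker_eq_bot.mpr hv.fintypeLinearCombination_injective
  obtain ⟨g, hg⟩ := LinearMap.exists_leftInverse_of_injective _ hinj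
  have hgv : ∀ i, g (v i) = Pi.single i 1 := fun i => by
    have := LinearMap.congr_fun hg (Pi.single i 1)
    simpa [Fintype.linearCombination_apply_single] using this
  -- in the coordinates given by a left inverse `g`, the family has matrix `1 + t N`, whose determinant
  -- is a polynomial in `t` that is `1` at `0`
  let N : Matrix ι ι F := Matrix.of fun i => g (w i)
  let p : Polynomial F :=
    ((1 : Matrix ι ι (Polynomial F)) + (Polynomial.X : Polynomial F) • N.map Polynomial.C).det
  have hp : ∀ t, p.eval t = (1 + t • N).det := fun t => by
    change Polynomial.evalRingHom t p = _
    rw [RingHom.map_det]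
    congr 1
    ext i j
    by_cases hij : i = j <;> simp [hij, mul_comm t]
  have hp0 : p ≠ 0 := fun h => by
    have := hp 0
    simp [h] at this
  obtain ⟨t, ht⟩ : ∃ t, (Polynomial.X * p).eval t ≠ 0 := by
    by_contra! hc
    have : Polynomial.X * p = 0 := Polynomial.funext fun t => by rw [hc t, Polynomial.eval_zero]
    rcases mul_eq_zero.mp this with h | h
    · exact Polynomial.X_ne_zero h
    · exact hp0 h
  rw [Polynomial.eval_mul, Polynomial.eval_X, hp] at ht
  refine ⟨t, left_ne_zero_of_mul ht, LinearIndependent.of_comp g ?_⟩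
  have := Matrix.linearIndependent_rows_of_det_ne_zero (right_ne_zero_of_mul ht)
  have h2 : (g ∘ fun i => v i + t • w i) = (1 + t • N).row := by
    funext i
    ext j
    simp [hgv, N, Matrix.one_apply, Pi.single_apply, eq_comm]
  rw [h2]
  exact this

section Pencil

variable {X Y : Type*} [AddCommGroup X] [Module F X] [AddCommGroup Y] [Module F Y]
  [FiniteDimensional F X]

/-- The linear map `T e` has the largest rank among all members of the family `T`. -/
def MaxRank (T : V →ₗ[F] X →ₗ[F] Y) (e : V) : Prop :=
  ∀ f, finrank F (LinearMap.range (T f)) ≤ finrank F (LinearMap.range (T e))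

lemma exists_maxRank (T : V →ₗ[F] X →ₗ[F] Y) : ∃ e, MaxRank T e := by
  let S : Set ℕ := Set.range fun f => finrank F (LinearMap.range (T f))
  have hb : BddAbove S := ⟨finrank F X, by
    rintro _ ⟨f, rfl⟩; exact LinearMap.finrank_range_le (T f)⟩
  obtain ⟨e, he⟩ := Nat.sSup_mem (s := S) ⟨_, ⟨0, rfl⟩⟩ hb
  exact ⟨e, fun f => by
    have := le_csSup hb (show _ ∈ S from ⟨f, rfl⟩)
    simp only at he this
    rw [he]; exact this⟩

lemma exists_lift_basis (T : X →ₗ[F] Y) : ∃ x : Fin (finrank F (LinearMap.range T)) → X,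
    LinearIndependent F (fun i => T (x i)) ∧
      Submodule.span F (Set.range fun i => T (x i)) = LinearMap.range T := by
  let b := Module.finBasis F (LinearMap.range T)
  choose x hx using fun i => (b i).2
  have h : (fun i => T (x i)) = Subtype.val ∘ b := funext hx
  refine ⟨x, ?_, ?_⟩
  · rw [h]
    exact b.linearIndependent.map' (LinearMap.range T).subtype (Submodule.ker_subtype _)
  · rw [h, Set.range_comp]
    have := congrArg (Submodule.map (LinearMap.range T).subtype) b.span_eq
    rwa [Submodule.map_span, Submodule.map_top, Submodule.range_subtype] at this

lemma card_le_finrank_range (T : X →ₗ[F] Y) {n : ℕ} (y : Fin n → Y)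
    (hy : LinearIndependent F y) (h : ∀ i, y i ∈ LinearMap.range T) :
    n ≤ finrank F (LinearMap.range T) := by
  have h1 : LinearIndependent F (fun i => (⟨y i, h i⟩ : LinearMap.range T)) :=
    LinearIndependent.of_comp (LinearMap.range T).subtype hy
  simpa using h1.fintype_card_le_finrank

variable [Infinite F]

/-- First-order condition at a point of maximal rank: every other member of the family maps the
kernel into the range. -/
lemma MaxRank.tangent {T : V →ₗ[F] X →ₗ[F] Y} {e : V} (he : MaxRank T e) {x : X}
    (hx : T e x = 0) (f : V) : T f x ∈ LinearMap.range (T e) := by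
  by_contra hc
  obtain ⟨z, hz, hspan⟩ := exists_lift_basis (T e)
  have hind : LinearIndependent F (Fin.cons (T f x) (fun i => T e (z i)) : Fin (_ + 1) → Y) := by
    rw [linearIndependent_finCons, hspan]; exact ⟨hz, hc⟩
  obtain ⟨t, ht, hi⟩ := exists_linearIndependent_add_smul
    (Fin.cons 0 (fun i => T f (z i))) hind
  have := card_le_finrank_range (T (e + t • f)) _ hi (fun i => by
    refine Fin.cases ?_ (fun i => ?_) i
    · refine ⟨t⁻¹ • x, ?_⟩
      simp [hx, smul_smul, ht]
    · exact ⟨z i, by simp⟩)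
  have := he (e + t • f)
  omega

/-- Every line through a point of maximal rank contains a second such point. -/
lemma MaxRank.exists_add_smul {T : V →ₗ[F] X →ₗ[F] Y} {e : V} (he : MaxRank T e) (f : V) :
    ∃ t : F, t ≠ 0 ∧ MaxRank T (e + t • f) := by
  obtain ⟨z, hz, -⟩ := exists_lift_basis (T e)
  obtain ⟨t, ht, hi⟩ := exists_linearIndependent_add_smul (fun i => T f (z i)) hz
  refine ⟨t, ht, fun g => (he g).trans (card_le_finrank_range _ _ hi fun i => ⟨z i, by simp⟩)⟩

end Pencil

/-- The vector `e` is generic for the space `A` of forms modulo the blade `ω`: if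
`e ∧ ω ∧ x = 0` for some `x ∈ A`, then every `f ∧ ω ∧ x` lies in `e ∧ ω ∧ A`. This is the first-order
condition satisfied by the vectors `e` for which `x ↦ e ∧ ω ∧ x` has maximal rank on `A`. -/
def IsGeneric (ω : ExteriorAlgebra F V) (A : Submodule F (ExteriorAlgebra F V)) (e : V) : Prop :=
  ∀ x ∈ A, ι F e * ω * x = 0 → ∀ f, ∃ x' ∈ A, ι F f * ω * x = ι F e * ω * x'

/-- Over an infinite field there is a vector generic for two spaces of forms at once, and every line
through it contains another one. The two conditions are obtained simultaneously from maximal rank of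
the direct sum of the two families of multiplication maps. -/
lemma exists_isGeneric [Infinite F] (ω : ExteriorAlgebra F V)
    (A B : Submodule F (ExteriorAlgebra F V)) [FiniteDimensional F A] [FiniteDimensional F B] :
    ∃ e, IsGeneric ω A e ∧ IsGeneric ω B e ∧
      ∀ f, ∃ t : F, t ≠ 0 ∧ IsGeneric ω A (e + t • f) ∧ IsGeneric ω B (e + t • f) := by
  let T : V →ₗ[F] (A × B) →ₗ[F] (ExteriorAlgebra F V × ExteriorAlgebra F V) :=
    { toFun := fun e => (LinearMap.mulLeft F (ι F e * ω) ∘ₗ A.subtype).prodMap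
        (LinearMap.mulLeft F (ι F e * ω) ∘ₗ B.subtype)
      map_add' := fun x y => LinearMap.ext fun z => by simp [add_mul, mul_assoc]
      map_smul' := fun c x => LinearMap.ext fun z => by simp [mul_assoc] }
  have hT : ∀ e (x : A) (y : B), T e (x, y) = (ι F e * ω * x, ι F e * ω * y) := fun _ _ _ => rfl
  have key : ∀ e, MaxRank T e → IsGeneric ω A e ∧ IsGeneric ω B e := by
    refine fun e he => ⟨fun x hx h0 f => ?_, fun x hx h0 f => ?_⟩
    · obtain ⟨⟨x', y'⟩, h⟩ := he.tangent (x := (⟨x, hx⟩, 0)) (by rw [hT]; simp [h0]) f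
      rw [hT, hT] at h
      exact ⟨x', x'.2, (congrArg Prod.fst h).symm⟩
    · obtain ⟨⟨x', y'⟩, h⟩ := he.tangent (x := (0, ⟨x, hx⟩)) (by rw [hT]; simp [h0]) f
      rw [hT, hT] at h
      exact ⟨y', y'.2, (congrArg Prod.snd h).symm⟩
  obtain ⟨e, he⟩ := exists_maxRank T
  refine ⟨e, (key e he).1, (key e he).2, fun f => ?_⟩
  obtain ⟨t, ht, h⟩ := he.exists_add_smul f
  exact ⟨t, ht, key _ h⟩

/-- Below the top degree, a generic vector does not annihilate a space that is nonzero modulo `ω`. -/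
lemma IsGeneric.exists_ne [FiniteDimensional F V] {E : Submodule F V} {s r : ℕ}
    {ω : ExteriorAlgebra F V} {A : Submodule F (ExteriorAlgebra F V)} {e : V}
    (hg : IsGeneric ω A e) (h : IsBlade E s ω) (hA : A ≤ ⋀[F]^r V) (hr : s + r < finrank F V)
    (h0 : ∃ x ∈ A, ω * x ≠ 0) : ∃ x ∈ A, ι F e * ω * x ≠ 0 := by
  by_contra! hc
  obtain ⟨x, hx, hx0⟩ := h0
  refine hx0 (h.eq_zero_of_forall (hA hx) hr fun f => ?_)
  obtain ⟨x', hx', h1⟩ := hg x hx (hc x hx) f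
  rw [h1, hc x' hx']

end Generic

/-! ### Slices and the cross-annihilation bound -/

section Cross

variable {F V : Type*} [Field F] [AddCommGroup V] [Module F V]

/-- The slice of `A` along `e`, modulo a blade `ω`: the forms `u` of degree `j` such that
`e ∧ ω ∧ u` lies in `ω ∧ A`. -/
def slice (ω : ExteriorAlgebra F V) (e : V) (A : Submodule F (ExteriorAlgebra F V)) (j : ℕ) :
    Submodule F (ExteriorAlgebra F V) :=
  ⋀[F]^j V ⊓ (lm ω A).comap (LinearMap.mulLeft F (ι F e * ω))

lemma slice_le {ω : ExteriorAlgebra F V} {e : V} {A : Submodule F (ExteriorAlgebra F V)} {j : ℕ} :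
    slice ω e A j ≤ ⋀[F]^j V := inf_le_left

lemma mem_slice {ω : ExteriorAlgebra F V} {e : V} {A : Submodule F (ExteriorAlgebra F V)} {j : ℕ}
    {u : ExteriorAlgebra F V} :
    u ∈ slice ω e A j ↔ u ∈ ⋀[F]^j V ∧ ∃ x ∈ A, ω * x = ι F e * ω * u := by
  rw [slice, Submodule.mem_inf, Submodule.mem_comap, mem_lm]; rfl

lemma ι_mul_ι_mul (e : V) (x : ExteriorAlgebra F V) : ι F e * (ι F e * x) = 0 := by
  rw [← mul_assoc, ι_sq_zero, zero_mul]

lemma one_le_finrank_lm {ω : ExteriorAlgebra F V} {A : Submodule F (ExteriorAlgebra F V)}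
    [FiniteDimensional F A] (h : ∃ x ∈ A, ω * x ≠ 0) : 1 ≤ finrank F (lm ω A) := by
  rw [Nat.one_le_iff_ne_zero, Ne, Submodule.finrank_eq_zero]
  intro h0
  obtain ⟨x, hx, hx0⟩ := h
  have := lm_mem (ω := ω) hx
  rw [h0] at this
  exact hx0 (by simpa using this)

lemma finrank_lm_eq_zero {ω : ExteriorAlgebra F V} {A : Submodule F (ExteriorAlgebra F V)}
    (h : ¬ ∃ x ∈ A, ω * x ≠ 0) : finrank F (lm ω A) = 0 := by
  push Not at h
  rw [lm_eq_bot h, finrank_bot]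

namespace IsBlade

variable [FiniteDimensional F V] {E : Submodule F V} {s : ℕ} {ω : ExteriorAlgebra F V}

/-- Rank–nullity for multiplication by `e` on `ω ∧ A`: the kernel is `e ∧ ω` times the slice. -/
lemma finrank_slice (h : IsBlade E s ω) {e : V} (he : e ∉ E) {j : ℕ}
    {A : Submodule F (ExteriorAlgebra F V)} (hA : A ≤ ⋀[F]^(j + 1) V) :
    finrank F (lm ω A) =
      finrank F (lm (ι F e * ω) A) + finrank F (lm (ι F e * ω) (slice ω e A j)) := by
  have : FiniteDimensional F A := fd_of_le hA
  rw [← rank_nullity_lm (ι F e) ω A]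
  suffices H : lm ω A ⊓ LinearMap.ker (LinearMap.mulLeft F (ι F e)) =
    lm (ι F e * ω) (slice ω e A j) by rw [H]
  apply le_antisymm
  · rintro y ⟨hy, hy0⟩
    obtain ⟨x, hx, rfl⟩ := mem_lm.mp hy
    rw [SetLike.mem_coe, LinearMap.mem_ker, LinearMap.mulLeft_apply, ← mul_assoc] at hy0
    obtain ⟨z, hz, hxz⟩ := h.exact he (hA hx) hy0
    rw [hxz]
    exact lm_mem (mem_slice.mpr ⟨hz, x, hx, hxz⟩)
  · intro y hy
    obtain ⟨u, hu, rfl⟩ := mem_lm.mp hy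
    obtain ⟨-, x, hx, hxu⟩ := mem_slice.mp hu
    refine ⟨hxu ▸ lm_mem hx, ?_⟩
    rw [SetLike.mem_coe, LinearMap.mem_ker, LinearMap.mulLeft_apply, mul_assoc, ι_mul_ι_mul]

/-- Slices of mutually annihilating spaces along a generic vector annihilate each other. -/
lemma slice_mul_slice (h : IsBlade E s ω) {e : V} (he : e ∉ E) {r : ℕ}
    (hr : s + 1 + 2 * r < finrank F V) {A B : Submodule F (ExteriorAlgebra F V)}
    (hA : A ≤ ⋀[F]^(r + 1) V) (hB : B ≤ ⋀[F]^(r + 1) V)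
    (hAB : ∀ x ∈ A, ∀ y ∈ B, ω * x * y = 0) (hg : IsGeneric ω A e) :
    ∀ u ∈ slice ω e A r, ∀ z ∈ slice ω e B r, ι F e * ω * u * z = 0 := by
  intro u hu z hz
  obtain ⟨hu', x, hx, hxu⟩ := mem_slice.mp hu
  obtain ⟨hz', y, hy, hyz⟩ := mem_slice.mp hz
  rw [mul_assoc]
  refine (h.extend he).eq_zero_of_forall (mul_mem' hu' hz') (by omega) fun f => ?_
  obtain ⟨x', hx', hf⟩ := hg x hx (by rw [mul_assoc, hxu, mul_assoc, ι_mul_ι_mul]) f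
  obtain ⟨c, -, hc⟩ := exists_comm (hA hx') hz'
  obtain ⟨d, -, hd⟩ := exists_comm (hB hy) (hA hx')
  calc ι F f * (ι F e * ω) * (u * z) = ι F f * (ι F e * ω * u) * z := by simp only [mul_assoc]
    _ = ι F f * ω * x * z := by rw [← hxu]; simp only [mul_assoc]
    _ = ι F e * ω * (x' * z) := by rw [hf, mul_assoc]
    _ = c • (ι F e * ω * z * x') := by rw [hc, mul_smul_comm, ← mul_assoc]
    _ = c • (ω * (y * x')) := by rw [← hyz, mul_assoc]
    _ = 0 := by rw [hd, mul_smul_comm, ← mul_assoc, hAB x' hx' y hy]; simp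

lemma finrank_lm_add_le' (h : IsBlade E s ω) {a c j : ℕ} (hn : s + c = finrank F V)
    {G : ExteriorAlgebra F V} (hG : G ∈ ⋀[F]^j V) (hG0 : ω * G ≠ 0) (hj : j ≤ c)
    {X : Submodule F (ExteriorAlgebra F V)} (hX : X ≤ ⋀[F]^a V)
    (h0 : ∀ x ∈ X, ω * x * G = 0) :
    finrank F (lm ω X) + (c - j).choose a ≤ c.choose a := by
  refine h.finrank_lm_add_le hn hG (fun h1 => hG0 ?_) hj hX fun x hx => ?_
  · obtain ⟨t, -, ht⟩ := exists_comm h.mem hG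
    rw [ht, h1, smul_zero]
  · obtain ⟨t, -, ht⟩ := exists_comm hG (mul_mem' h.mem (hX hx))
    rw [mul_assoc, ht, h0 x hx, smul_zero]

/-- The cross-annihilation bound, an exterior analogue of the Hilton–Milner bound for two nonempty
cross-intersecting families. -/
theorem cross [Infinite F] {m r : ℕ} (h : IsBlade E s ω) (hn : s + m = finrank F V)
    (hm : 2 * r ≤ m) {A B : Submodule F (ExteriorAlgebra F V)} (hA : A ≤ ⋀[F]^r V)
    (hB : B ≤ ⋀[F]^r V) (hAB : ∀ x ∈ A, ∀ y ∈ B, ω * x * y = 0)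
    (hA0 : ∃ x ∈ A, ω * x ≠ 0) (hB0 : ∃ y ∈ B, ω * y ≠ 0) :
    finrank F (lm ω A) + finrank F (lm ω B) + (m - r).choose r ≤ m.choose r + 1 := by
  induction m generalizing E s ω r A B with
  | zero =>
    obtain rfl : r = 0 := by omega
    have := h.finrank_pairing (r := 0) (by omega) hA hB hAB
    simpa using this
  | succ m ih =>
    rcases hm.eq_or_lt with hm | hm
    · have := h.finrank_pairing (r := r) (by omega) hA hB hAB
      rw [hm] at this
      rw [show m + 1 - r = r by omega, Nat.choose_self]
      omega
    rcases r with _ | r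
    · obtain ⟨x, hx, hx0⟩ := hA0
      obtain ⟨y, hy, hy0⟩ := hB0
      have hxy := hAB x hx y hy
      obtain ⟨b, rfl⟩ := mem_zero (hB hy)
      rw [← Algebra.commutes, ← Algebra.smul_def] at hxy hy0
      rcases smul_eq_zero.mp hxy with hb | hb
      · exact absurd (by rw [hb, zero_smul]) hy0
      · exact absurd hb hx0
    have hfA : FiniteDimensional F A := fd_of_le hA
    have hfB : FiniteDimensional F B := fd_of_le hB
    have hBA : ∀ y ∈ B, ∀ x ∈ A, ω * y * x = 0 := fun y hy x hx => by
      obtain ⟨t, -, ht⟩ := exists_comm (hB hy) (hA hx)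
      rw [mul_assoc, ht, mul_smul_comm, ← mul_assoc, hAB x hx y hy, smul_zero]
    obtain ⟨e, hgA, hgB, -⟩ := exists_isGeneric ω A B
    have hA0' := hgA.exists_ne h hA (by omega) hA0
    have hB0' := hgB.exists_ne h hB (by omega) hB0
    have he : e ∉ E := h.notMem_of hA0'.choose_spec.2
    have h' := h.extend he
    have key : ∀ {A B : Submodule F (ExteriorAlgebra F V)}, A ≤ ⋀[F]^(r + 1) V →
        B ≤ ⋀[F]^(r + 1) V → (∀ x ∈ A, ∀ y ∈ B, ω * x * y = 0) →
        (∃ y ∈ B, ι F e * ω * y ≠ 0) →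
        finrank F (lm (ι F e * ω) (slice ω e A r)) + (m - (r + 1)).choose r ≤ m.choose r := by
      intro A B hA hB hAB hB0
      obtain ⟨y, hy, hy0⟩ := hB0
      refine h'.finrank_lm_add_le' (by omega) (hB hy) hy0 (by omega) slice_le fun u hu => ?_
      obtain ⟨-, x, hx, hxu⟩ := mem_slice.mp hu
      rw [← hxu, hAB x hx y hy]
    -- Pascal's rule adds the bounds in degrees `r + 1` (for `A`, `B`) and `r` (for their slices)
    have h1 := ih h' (r := r + 1) (by omega) (by omega) hA hB
      (fun x hx y hy => by rw [mul_assoc, mul_assoc, ← mul_assoc ω, hAB x hx y hy, mul_zero])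
      hA0' hB0'
    have h2 : finrank F (lm (ι F e * ω) (slice ω e A r)) +
        finrank F (lm (ι F e * ω) (slice ω e B r)) + (m - (r + 1)).choose r ≤ m.choose r := by
      by_cases hA1 : ∃ x ∈ slice ω e A r, ι F e * ω * x ≠ 0
      · by_cases hB1 : ∃ x ∈ slice ω e B r, ι F e * ω * x ≠ 0
        · have h3 := ih h' (r := r) (by omega) (by omega) slice_le slice_le
            (h.slice_mul_slice he (by omega) hA hB hAB hgA) hA1 hB1
          have : FiniteDimensional F (slice ω e A r) := fd_of_le slice_le
          have : FiniteDimensional F (slice ω e B r) := fd_of_le slice_le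
          have h4 := one_le_finrank_lm hA1
          have h5 := one_le_finrank_lm hB1
          rcases r with _ | r
          · simp at h3; omega
          · rw [show m - (r + 1) = m - (r + 1 + 1) + 1 by omega, Nat.choose_succ_succ'] at h3
            have : 0 < (m - (r + 1 + 1)).choose r := Nat.choose_pos (by omega)
            omega
        · rw [finrank_lm_eq_zero hB1]
          exact key hA hB hAB hB0'
      · rw [finrank_lm_eq_zero hA1, zero_add]
        exact key hB hA hBA hA0'
    rw [h.finrank_slice he hA, h.finrank_slice he hB, Nat.choose_succ_succ',
      show m + 1 - (r + 1) = m - (r + 1) + 1 by omega, Nat.choose_succ_succ']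
    omega

end IsBlade

end Cross

/-! ### The inductive bound over an infinite field -/

section HiltonMilner

variable {F V : Type*} [Field F] [AddCommGroup V] [Module F V] [FiniteDimensional F V]

namespace IsBlade

variable {E : Submodule F V} {s : ℕ} {ω : ExteriorAlgebra F V}

/-- The bound in the case where `L` becomes trivial in the exterior algebra of `V / (E + a)`, being
annihilated by `b`. The slice of `L` along `a` and the quotient of `a ∧ L` by `b` annihilate each
other, so the cross-annihilation bound applies; if the slice vanishes, an auxiliary form `G` of
degree `1` or `2` annihilating `a ∧ L` gives the bound. -/
lemma finrank_le_of_trivial [Infinite F] {m j g : ℕ} (h : IsBlade E s ω)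
    (hn : s + m = finrank F V) (hm : 2 * (j + 2) < m)
    {L : Submodule F (ExteriorAlgebra F V)} (hL : L ≤ ⋀[F]^(j + 2) V)
    (hLL : ∀ x ∈ L, ∀ y ∈ L, ω * x * y = 0)
    (hnt : ∀ v, v ∉ E → ∃ x ∈ L, ι F v * ω * x ≠ 0) {a b : V} {G : ExteriorAlgebra F V}
    (hg : g = 1 ∨ g = 2) (hG : G ∈ ⋀[F]^g V) (hG0 : G * (ι F b * (ι F a * ω)) ≠ 0)
    (hbL : ∀ x ∈ L, ι F b * (ι F a * ω) * x = 0) (hGL : ∀ x ∈ L, G * (ι F a * ω) * x = 0) :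
    finrank F (lm ω L) + (m - j - 3).choose (j + 1) ≤ (m - 1).choose (j + 1) + 1 := by
  obtain ⟨m, rfl⟩ : ∃ m', m = m' + 2 := ⟨m - 2, by omega⟩
  have ha : a ∉ E := fun ha => hG0 (by rw [h.kill a ha]; simp)
  have h1 := h.extend ha
  have hb : b ∉ E ⊔ Submodule.span F {a} := fun hb => hG0 (by rw [h1.kill b hb]; simp)
  have h2 := h1.extend hb
  set Ω := ι F b * (ι F a * ω) with hΩ
  set A := slice ω a L (j + 1) with hA
  set B := slice (ι F a * ω) b L (j + 1) with hB
  have hfL : FiniteDimensional F L := fd_of_le hL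
  have hfB : FiniteDimensional F B := fd_of_le slice_le
  have d1 : finrank F (lm ω L) = finrank F (lm (ι F a * ω) L) + finrank F (lm (ι F a * ω) A) :=
    h.finrank_slice ha hL
  have d2 : finrank F (lm (ι F a * ω) L) = finrank F (lm Ω L) + finrank F (lm Ω B) :=
    h1.finrank_slice hb hL
  have d3 : finrank F (lm (ι F a * ω) A) = finrank F (lm Ω A) +
    finrank F (lm Ω (slice (ι F a * ω) b A j)) := h1.finrank_slice hb slice_le
  have d4 : finrank F (lm Ω L) = 0 := by rw [lm_eq_bot hbL, finrank_bot]
  have d5 : finrank F (lm Ω (slice (ι F a * ω) b A j)) ≤ m.choose j := by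
    have : FiniteDimensional F (⋀[F]^j V) := inferInstance
    exact (Submodule.finrank_mono (Submodule.map_mono slice_le)).trans
      (h2.finrank_lm_le (k := j) (c := m) (by omega))
  have d6 : 1 ≤ finrank F (lm (ι F a * ω) L) := one_le_finrank_lm (hnt a ha)
  have hB0 : ∃ y ∈ B, Ω * y ≠ 0 := by
    by_contra hc
    have := finrank_lm_eq_zero hc
    omega
  have hAB : ∀ x ∈ A, ∀ y ∈ B, Ω * x * y = 0 := by
    intro u hu y hy
    obtain ⟨hu', x, hx, hxu⟩ := mem_slice.mp hu
    obtain ⟨hy', z, hz, hyz⟩ := mem_slice.mp hy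
    obtain ⟨c, -, hc⟩ := exists_comm hu' hy'
    obtain ⟨d, -, hd⟩ := exists_comm (hL hz) hu'
    rw [mul_assoc, hc, mul_smul_comm, ← mul_assoc, ← hyz, mul_assoc, hd, mul_smul_comm,
      ← mul_assoc, ← hxu, hLL x hx z hz, smul_zero, smul_zero]
  have d7 : finrank F (lm Ω A) + finrank F (lm Ω B) + (m - (j + 1)).choose (j + 1) ≤
      m.choose (j + 1) + 1 := by
    by_cases hA0 : ∃ x ∈ A, Ω * x ≠ 0
    · exact h2.cross (r := j + 1) (by omega) (by omega) slice_le slice_le hAB hA0 hB0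
    · rw [finrank_lm_eq_zero hA0, zero_add]
      have := h2.finrank_lm_add_le (a := j + 1) (c := m) (by omega) hG hG0 (by omega)
        (X := B) slice_le (fun y hy => by
          obtain ⟨hy', z, hz, hyz⟩ := mem_slice.mp hy
          rw [mul_assoc, ← hyz, ← mul_assoc, hGL z hz])
      have hle : (m - (j + 1)).choose (j + 1) ≤ (m - g).choose (j + 1) + 1 := by
        by_cases hgj : g ≤ j + 1
        · exact (Nat.choose_le_choose _ (by omega)).trans (Nat.le_succ _)
        · obtain rfl : g = 2 := by omega
          obtain rfl : j = 0 := by omega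
          simp
          omega
      omega
  rw [show m + 2 - j - 3 = m - (j + 1) by omega, show m + 2 - 1 = m + 1 by omega,
    Nat.choose_succ_succ']
  omega

/-- The slice along a generic vector `e`, in the inductive step for the case where `L` stays
nontrivial modulo `e`. The hypothesis `ih` is the bound in lower degree. -/
lemma finrank_slice_le {m j : ℕ} (h : IsBlade E s ω)
    (hn : s + (m + 1) = finrank F V) (hm : 2 * (j + 2) ≤ m)
    {L : Submodule F (ExteriorAlgebra F V)} (hL : L ≤ ⋀[F]^(j + 2) V)
    (hLL : ∀ x ∈ L, ∀ y ∈ L, ω * x * y = 0) {e : V} (he : e ∉ E) (hg : IsGeneric ω L e)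
    (hnt : ∀ v, v ∉ E ⊔ Submodule.span F {e} → ∃ x ∈ L, ι F v * (ι F e * ω) * x ≠ 0)
    (ih : ∀ i, j = i + 1 →
      (∀ v, v ∉ E ⊔ Submodule.span F {e} →
        ∃ x ∈ slice ω e L (j + 1), ι F v * (ι F e * ω) * x ≠ 0) →
      finrank F (lm (ι F e * ω) (slice ω e L (j + 1))) + (m - i - 3).choose (i + 1) ≤
        (m - 1).choose (i + 1) + 1) :
    finrank F (lm (ι F e * ω) (slice ω e L (j + 1))) + (m - j - 3).choose j ≤
      (m - 1).choose j := by
  have h1 := h.extend he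
  have hSS := h.slice_mul_slice he (by omega) hL hL hLL hg
  set S := slice ω e L (j + 1) with hS
  by_cases hS0 : ∀ v, v ∉ E ⊔ Submodule.span F {e} → ∃ x ∈ S, ι F v * (ι F e * ω) * x ≠ 0
  · rcases j with _ | j
    · exfalso
      -- a nonzero vector of a space of vectors with vanishing products annihilates that space
      obtain ⟨v₀, hv₀⟩ := h1.exists_notMem (by omega)
      obtain ⟨u, hu, hu0⟩ := hS0 v₀ hv₀
      obtain ⟨v, rfl⟩ := mem_one' (slice_le hu)
      have hv : v ∉ E ⊔ Submodule.span F {e} := fun hv => hu0 (by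
        obtain ⟨c, -, hc⟩ := exists_comm h1.mem (ι_mem v)
        rw [mul_assoc, hc, h1.kill v hv, smul_zero, mul_zero])
      obtain ⟨x, hx, hx0⟩ := hS0 v hv
      obtain ⟨c, -, hc⟩ := exists_comm (ι_mem v) h1.mem
      exact hx0 (by rw [hc, smul_mul_assoc, hSS _ hu _ hx, smul_zero])
    · have h3 := ih j rfl hS0
      rw [show m - j - 3 = m - (j + 1) - 3 + 1 by omega, Nat.choose_succ_succ'] at h3
      have : 0 < (m - (j + 1) - 3).choose j := Nat.choose_pos (by omega)
      omega
  · push Not at hS0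
    obtain ⟨v, hv, hv0⟩ := hS0
    have h2 := h1.extend hv
    obtain ⟨y, hy, hy0⟩ := hnt v hv
    rw [h1.finrank_slice hv slice_le, lm_eq_bot hv0, finrank_bot, zero_add]
    have := h2.finrank_lm_add_le' (a := j) (c := m - 1) (by omega) (hL hy) hy0 (by omega)
      (X := slice (ι F e * ω) v S j) slice_le (fun q hq => by
        obtain ⟨-, u, hu, huq⟩ := mem_slice.mp hq
        obtain ⟨-, x, hx, hxu⟩ := mem_slice.mp hu
        rw [← huq, ← hxu, hLL x hx y hy])
    rwa [show m - 1 - (j + 2) = m - j - 3 by omega] at this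

/-- The bound over an infinite field, relative to a blade. -/
theorem hiltonMilner [Infinite F] {m j : ℕ} (h : IsBlade E s ω) (hn : s + m = finrank F V)
    (hm : 2 * (j + 2) ≤ m) {L : Submodule F (ExteriorAlgebra F V)} (hL : L ≤ ⋀[F]^(j + 2) V)
    (hLL : ∀ x ∈ L, ∀ y ∈ L, ω * x * y = 0)
    (hnt : ∀ v, v ∉ E → ∃ x ∈ L, ι F v * ω * x ≠ 0) :
    finrank F (lm ω L) + (m - j - 3).choose (j + 1) ≤ (m - 1).choose (j + 1) + 1 := by
  induction m generalizing E s ω j L with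
  | zero => omega
  | succ m ih =>
    rcases hm.eq_or_lt with hm | hm
    · have := h.finrank_pairing (r := j + 2) (by omega) hL hL hLL
      have hsymm := Nat.choose_symm_of_eq_add (show m = (j + 1) + (j + 1 + 1) by omega)
      rw [show 2 * (j + 2) = m + 1 by omega, Nat.choose_succ_succ'] at this
      rw [show m + 1 - j - 3 = j + 1 by omega, Nat.choose_self, Nat.add_sub_cancel]
      omega
    have hfL : FiniteDimensional F L := fd_of_le hL
    have hL0 : ∃ x ∈ L, ω * x ≠ 0 := by
      obtain ⟨v, hv⟩ := h.exists_notMem (by omega)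
      obtain ⟨x, hx, hx0⟩ := hnt v hv
      exact ⟨x, hx, fun h0 => hx0 (by rw [mul_assoc, h0, mul_zero])⟩
    have hgE : ∀ e, IsGeneric ω L e → e ∉ E := fun e hg => by
      obtain ⟨x, hx, hx0⟩ := hg.exists_ne h hL (by omega) hL0
      exact h.notMem_of hx0
    by_cases hI : ∃ e, IsGeneric ω L e ∧
        ∀ v, v ∉ E ⊔ Submodule.span F {e} → ∃ x ∈ L, ι F v * (ι F e * ω) * x ≠ 0
    · obtain ⟨e, hg, hnt'⟩ := hI
      have he := hgE e hg
      have h1 := h.extend he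
      have d1 := ih h1 (by omega) (by omega) hL
        (fun x hx y hy => by rw [mul_assoc, mul_assoc, ← mul_assoc ω, hLL x hx y hy, mul_zero])
        hnt'
      have d2 := h.finrank_slice_le hn (by omega) hL hLL he hg hnt' (by
        rintro i rfl hS
        exact ih h1 (by omega) (by omega) slice_le
          (h.slice_mul_slice he (by omega) hL hL hLL hg) hS)
      obtain ⟨m, rfl⟩ : ∃ m', m = m' + 1 := ⟨m - 1, by omega⟩
      rw [h.finrank_slice he hL, show m + 1 + 1 - j - 3 = m + 1 - j - 3 + 1 by omega,
        Nat.choose_succ_succ', show m + 1 + 1 - 1 = m + 1 by omega, Nat.choose_succ_succ' m]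
      simp only [Nat.add_sub_cancel] at d1 d2
      omega
    push Not at hI
    -- two independent generic vectors `e`, `e'`, together with `w`, `w'` such that
    -- `w ∧ e ∧ L = 0` and `w' ∧ e' ∧ L = 0`
    obtain ⟨e, hg, -, hpencil⟩ := exists_isGeneric ω L L
    have he := hgE e hg
    have h1 := h.extend he
    obtain ⟨w, hw, hwL⟩ := hI e hg
    have h2 := h1.extend hw
    obtain ⟨f, hf⟩ := h2.exists_notMem (by omega)
    obtain ⟨t, ht, hg', -⟩ := hpencil f
    obtain ⟨e', he'⟩ : ∃ e', e' = e + t • f := ⟨_, rfl⟩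
    rw [← he'] at hg'
    have he2 : e' ∉ E ⊔ Submodule.span F {e} ⊔ Submodule.span F {w} := by
      intro hc
      have h3 : e ∈ E ⊔ Submodule.span F {e} ⊔ Submodule.span F {w} :=
        Submodule.mem_sup_left (Submodule.mem_sup_right (Submodule.mem_span_singleton_self e))
      have h4 := sub_mem hc h3
      rw [he', add_sub_cancel_left, Submodule.smul_mem_iff _ ht] at h4
      exact hf h4
    have h3 := h2.extend he2
    obtain ⟨w', hw', hwL'⟩ := hI e' hg'
    by_cases hw2 : w' ∈ E ⊔ Submodule.span F {e} ⊔ Submodule.span F {w} ⊔ Submodule.span F {e'}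
    · obtain ⟨y, hy, z, hz, hyz⟩ := Submodule.mem_sup.mp hw2
      obtain ⟨γ, rfl⟩ := Submodule.mem_span_singleton.mp hz
      obtain ⟨y₁, hy₁, z₁, hz₁, rfl⟩ := Submodule.mem_sup.mp hy
      obtain ⟨β, rfl⟩ := Submodule.mem_span_singleton.mp hz₁
      obtain ⟨ε, hε, z₂, hz₂, rfl⟩ := Submodule.mem_sup.mp hy₁
      obtain ⟨α, rfl⟩ := Submodule.mem_span_singleton.mp hz₂
      -- `a` spans the intersection of the planes of `e, w` and `e', w'` modulo `E`
      obtain ⟨b, c, hc, hb⟩ : ∃ b : V, ∃ c : F, c ≠ 0 ∧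
          ι F b * ι F (α • e + β • w) = c • (ι F w * ι F e) := by
        by_cases hα : α = 0
        · refine ⟨e, -β, ?_, ?_⟩
          · rw [Ne, neg_eq_zero]
            rintro rfl
            refine hw' ?_
            rw [← hyz, hα, zero_smul, zero_smul, add_zero, add_zero]
            exact add_mem (Submodule.mem_sup_left hε) (Submodule.mem_sup_right
              (Submodule.smul_mem _ _ (Submodule.mem_span_singleton_self _)))
          · rw [hα, zero_smul, zero_add, map_smul, mul_smul_comm, ι_swap, smul_neg, neg_smul]
        · refine ⟨w, α, hα, ?_⟩
          rw [map_add, map_smul, map_smul, mul_add, mul_smul_comm, mul_smul_comm, ι_sq_zero,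
            smul_zero, add_zero]
      have hb' : ι F b * (ι F (α • e + β • w) * ω) = c • (ι F w * (ι F e * ω)) := by
        rw [← mul_assoc, hb, smul_mul_assoc, mul_assoc]
      refine h.finrank_le_of_trivial hn hm hL hLL hnt (a := α • e + β • w) (b := b)
        (G := ι F e') (Or.inl rfl) (ι_mem e') ?_ ?_ ?_
      · rw [hb', mul_smul_comm]
        exact smul_ne_zero hc h3.ne
      · intro x hx
        rw [hb', smul_mul_assoc, hwL x hx, smul_zero]
      · intro x hx
        have h4 := hwL' x hx
        have h5 : ι F w' * (ι F e' * ω) = -(ι F e' * (ι F (α • e + β • w) * ω)) := by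
          have : w' = ε + (α • e + β • w) + γ • e' := by rw [← hyz]; abel
          rw [this, map_add, map_add, add_mul, add_mul, map_smul (ι F) γ, smul_mul_assoc,
            ι_mul_ι_mul, smul_zero, add_zero, ← mul_assoc, ι_swap, neg_mul, mul_assoc,
            h.kill ε hε, mul_zero, neg_zero, zero_add, ← mul_assoc, ι_swap, neg_mul, mul_assoc]
        rw [h5, neg_mul, neg_eq_zero] at h4
        exact h4
    · have h4 := h3.extend hw2
      refine h.finrank_le_of_trivial hn hm hL hLL hnt (a := e) (b := w)
        (G := ι F w' * ι F e') (Or.inr rfl) (ι_mul_mem w' (ι_mem e')) ?_ hwL ?_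
      · rw [mul_assoc]; exact h4.ne
      · intro x hx
        obtain ⟨c, -, hc⟩ := exists_comm (ι_mul_mem w' (ι_mem e')) (ι_mem (F := F) e)
        have h5 := hwL' x hx
        simp only [mul_assoc] at h5
        rw [← mul_assoc, hc, smul_mul_assoc, smul_mul_assoc]
        simp only [mul_assoc]
        rw [h5, mul_zero, smul_zero]

end IsBlade

end HiltonMilner

/-! ### Extension of scalars -/

section BaseChange

open scoped TensorProduct

variable {F V : Type*} [Field F] [AddCommGroup V] [Module F V]

/-- The bound over an infinite field, for subspaces of the exterior algebra itself. -/
theorem bound_of_infinite [Infinite F] [FiniteDimensional F V] {k : ℕ} (hk : 0 < k)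
    (hkn : 2 * k ≤ finrank F V) {L : Submodule F (ExteriorAlgebra F V)} (hL : L ≤ ⋀[F]^k V)
    (hLL : ∀ x ∈ L, ∀ y ∈ L, x * y = 0) (hnt : ∀ v : V, v ≠ 0 → ∃ x ∈ L, ι F v * x ≠ 0) :
    finrank F L ≤
      (finrank F V - 1).choose (k - 1) - (finrank F V - k - 1).choose (k - 1) + 1 := by
  rcases k with _ | _ | j
  · omega
  · simp only [zero_add] at hL hkn
    have : Nontrivial V := Module.nontrivial_of_finrank_pos (R := F) (by omega)
    -- in degree one `L` would be annihilated by any of its own nonzero vectors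
    obtain ⟨v₀, hv₀⟩ := exists_ne (0 : V)
    obtain ⟨x, hx, hx0⟩ := hnt v₀ hv₀
    obtain ⟨v, rfl⟩ := mem_one' (hL hx)
    obtain ⟨y, hy, hy0⟩ := hnt v (by rintro rfl; simp at hx0)
    exact absurd (hLL _ hx _ hy) hy0
  · have h := (isBlade_one (F := F) (V := V)).hiltonMilner (zero_add _) hkn hL
      (fun x hx y hy => by rw [one_mul, hLL x hx y hy])
      (fun v hv => by
        obtain ⟨x, hx, hx0⟩ := hnt v (fun h0 => hv (h0 ▸ zero_mem _))
        exact ⟨x, hx, by rwa [mul_one]⟩)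
    have h1 : lm (1 : ExteriorAlgebra F V) L = L := by
      ext x; simp
    rw [h1] at h
    rw [show finrank F V - (j + 2) - 1 = finrank F V - j - 3 by omega]
    simp only [show j + 1 + 1 - 1 = j + 1 by omega]
    have : (finrank F V - j - 3).choose (j + 1) ≤ (finrank F V - 1).choose (j + 1) :=
      Nat.choose_le_choose _ (by omega)
    omega

variable (K : Type*) [Field K] [Algebra F K]

/-- The canonical map from the exterior algebra of `V` to that of its extension of scalars. -/
noncomputable def scalarExt : ExteriorAlgebra F V →ₐ[F] ExteriorAlgebra K (K ⊗[F] V) :=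
  ExteriorAlgebra.lift F
    ⟨(ι K : K ⊗[F] V →ₗ[K] _).restrictScalars F ∘ₗ TensorProduct.mk F K V 1,
      fun v => by simp⟩

lemma scalarExt_ι (v : V) : scalarExt K (ι F v) = ι K ((1 : K) ⊗ₜ[F] v) := by
  rw [scalarExt, ExteriorAlgebra.lift_ι_apply]; rfl

/-- Two elements of `K ⊗ V` anticommute in `K ⊗ ⋀ V`. -/
lemma baseChange_ι_anticomm (x y : K ⊗[F] V) :
    (ι F).baseChange K x * (ι F).baseChange K y +
      (ι F).baseChange K y * (ι F).baseChange K x = 0 := by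
  induction x with
  | zero => simp
  | add a b ha hb =>
    rw [map_add, add_mul, mul_add, add_add_add_comm, ha, hb, add_zero]
  | tmul k v =>
    induction y with
    | zero => simp
    | add a b ha hb =>
      rw [map_add, add_mul, mul_add, add_add_add_comm, ha, hb, add_zero]
    | tmul l w =>
      rw [LinearMap.baseChange_tmul, LinearMap.baseChange_tmul,
        Algebra.TensorProduct.tmul_mul_tmul, Algebra.TensorProduct.tmul_mul_tmul, mul_comm l k,
        ← TensorProduct.tmul_add, ι_add_mul_swap, TensorProduct.tmul_zero]

lemma baseChange_ι_sq (x : K ⊗[F] V) :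
    (ι F).baseChange K x * (ι F).baseChange K x = 0 := by
  induction x with
  | zero => simp
  | add a b ha hb =>
    have := baseChange_ι_anticomm K a b
    rw [map_add, add_mul, mul_add, mul_add, ha, hb, zero_add, add_zero, this]
  | tmul k v =>
    rw [LinearMap.baseChange_tmul, Algebra.TensorProduct.tmul_mul_tmul, ι_sq_zero,
      TensorProduct.tmul_zero]

/-- The canonical map `⋀ (K ⊗ V) → K ⊗ ⋀ V`. -/
noncomputable def toTensor : ExteriorAlgebra K (K ⊗[F] V) →ₐ[K] K ⊗[F] ExteriorAlgebra F V :=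
  ExteriorAlgebra.lift K ⟨(ι F).baseChange K, baseChange_ι_sq K⟩

lemma toTensor_ι (w : K ⊗[F] V) : toTensor K (ι K w) = (ι F).baseChange K w := by
  rw [toTensor, ExteriorAlgebra.lift_ι_apply]

lemma toTensor_scalarExt (x : ExteriorAlgebra F V) :
    toTensor K (scalarExt K x) = (1 : K) ⊗ₜ[F] x := by
  have : ((toTensor (F := F) (V := V) K).restrictScalars F).comp (scalarExt K) =
      Algebra.TensorProduct.includeRight := by
    ext v
    simp [scalarExt_ι, toTensor_ι]
  exact DFunLike.congr_fun this x

lemma scalarExt_mem {k : ℕ} {x : ExteriorAlgebra F V} (hx : x ∈ ⋀[F]^k V) :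
    scalarExt K x ∈ ⋀[K]^k (K ⊗[F] V) := by
  induction hx using Submodule.pow_induction_on_left' with
  | algebraMap r =>
    rw [AlgHom.commutes, IsScalarTower.algebraMap_apply F K, Algebra.algebraMap_eq_smul_one]
    exact Submodule.smul_mem _ _ one_mem'
  | add x y i hx hy h1 h2 => rw [map_add]; exact add_mem h1 h2
  | mem_mul m hm i x hx ih =>
    obtain ⟨v, rfl⟩ := hm
    rw [map_mul, scalarExt_ι]
    exact ι_mul_mem _ ih

lemma linearIndependent_scalarExt {ι' : Type*} {x : ι' → ExteriorAlgebra F V}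
    (hx : LinearIndependent F x) : LinearIndependent K (fun i => scalarExt K (x i)) := by
  refine LinearIndependent.of_comp (toTensor K).toLinearMap ?_
  have := Module.Flat.linearIndependent_one_tmul (S := K) hx
  have h : ((toTensor K).toLinearMap ∘ fun i => scalarExt K (x i)) = fun i => (1 : K) ⊗ₜ[F] x i :=
    funext fun i => toTensor_scalarExt K (x i)
  rw [h]
  exact this

/-- Extension of scalars preserves nontriviality: a vector of `K ⊗ V` annihilating `L` has all its
coordinates in a basis of `K` over `F` annihilating `L`. -/
lemma exists_mul_scalarExt_ne {L : Submodule F (ExteriorAlgebra F V)}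
    (hnt : ∀ v : V, v ≠ 0 → ∃ x ∈ L, ι F v * x ≠ 0) {w : K ⊗[F] V} (hw : w ≠ 0) :
    ∃ x ∈ L, ι K w * scalarExt K x ≠ 0 := by
  by_contra! hc
  let κ := Module.Free.chooseBasis F K
  have key : ∀ (w : K ⊗[F] V) (x : ExteriorAlgebra F V) (i),
      TensorProduct.equivFinsuppOfBasisLeft κ ((ι F).baseChange K w * ((1 : K) ⊗ₜ[F] x)) i =
        ι F (TensorProduct.equivFinsuppOfBasisLeft κ w i) * x := by
    intro w x i
    induction w with
    | zero => simp
    | add a b ha hb => simp only [map_add, add_mul, Finsupp.add_apply, ha, hb]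
    | tmul k v =>
      rw [LinearMap.baseChange_tmul, Algebra.TensorProduct.tmul_mul_tmul, mul_one,
        TensorProduct.equivFinsuppOfBasisLeft_apply_tmul_apply,
        TensorProduct.equivFinsuppOfBasisLeft_apply_tmul_apply, map_smul, smul_mul_assoc]
  refine hw ((TensorProduct.equivFinsuppOfBasisLeft κ).injective ?_)
  rw [map_zero]
  ext i
  by_contra hi
  obtain ⟨x, hx, hx0⟩ := hnt _ hi
  have := congrArg (toTensor K) (hc x hx)
  rw [map_mul, toTensor_ι, toTensor_scalarExt, map_zero] at this
  rw [← key, this] at hx0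
  simp at hx0

end BaseChange

end ExtHM

theorem hilton_milner_exterior (𝔽 : Type*) [Field 𝔽] (hchar : (2 : 𝔽) ≠ 0)
    (V : Type*) [AddCommGroup V] [Module 𝔽 V] [FiniteDimensional 𝔽 V]
    (n k : ℕ) (hdim : Module.finrank 𝔽 V = n) (hk : 0 < k) (hkn : 2 * k ≤ n)
    (L : Submodule 𝔽 (ExteriorAlgebra 𝔽 V)) (hL : L ≤ ⋀[𝔽]^k V)
    (hann : ∀ x ∈ L, ∀ y ∈ L, x * y = 0)
    (hnontriv : ¬ ∃ v : V, v ≠ 0 ∧ ∀ x ∈ L, ExteriorAlgebra.ι 𝔽 v * x = 0) :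
    Module.finrank 𝔽 L ≤ (n - 1).choose (k - 1) - (n - k - 1).choose (k - 1) + 1 := by
  subst hdim
  push Not at hnontriv
  let K := AlgebraicClosure 𝔽
  let W := TensorProduct 𝔽 K V
  let L' : Submodule K (ExteriorAlgebra K W) := Submodule.span K (ExtHM.scalarExt K '' L)
  have hW : Module.finrank K W = Module.finrank 𝔽 V := Module.finrank_baseChange
  have hL' : L' ≤ ⋀[K]^k W := by
    refine Submodule.span_le.mpr ?_
    rintro _ ⟨x, hx, rfl⟩
    exact ExtHM.scalarExt_mem K (hL hx)
  have hmem : ∀ x ∈ L, ExtHM.scalarExt K x ∈ L' := fun x hx => Submodule.subset_span ⟨x, hx, rfl⟩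
  have hann' : ∀ x ∈ L', ∀ y ∈ L', x * y = 0 := by
    intro x hx y hy
    induction hx, hy using Submodule.span_induction₂ with
    | mem_mem x y hx hy =>
      obtain ⟨x, hx, rfl⟩ := hx
      obtain ⟨y, hy, rfl⟩ := hy
      rw [← map_mul, hann x hx y hy, map_zero]
    | zero_left y hy => exact zero_mul y
    | zero_right x hx => exact mul_zero x
    | add_left x y z hx hy hz h1 h2 => rw [add_mul, h1, h2, add_zero]
    | add_right x y z hx hy hz h1 h2 => rw [mul_add, h1, h2, add_zero]
    | smul_left r x y hx hy h => rw [smul_mul_assoc, h, smul_zero]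
    | smul_right r x y hx hy h => rw [mul_smul_comm, h, smul_zero]
  have hnt' : ∀ w : W, w ≠ 0 → ∃ x ∈ L', ExteriorAlgebra.ι K w * x ≠ 0 := fun w hw => by
    obtain ⟨x, hx, hx0⟩ := ExtHM.exists_mul_scalarExt_ne K hnontriv hw
    exact ⟨_, hmem x hx, hx0⟩
  have hfL : FiniteDimensional 𝔽 L := ExtHM.fd_of_le hL
  have hfL' : FiniteDimensional K L' := ExtHM.fd_of_le hL'
  have hrank : Module.finrank 𝔽 L ≤ Module.finrank K L' := by
    let b := Module.finBasis 𝔽 L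
    have h1 := ExtHM.linearIndependent_scalarExt K
      (b.linearIndependent.map' L.subtype (Submodule.ker_subtype _))
    have h2 : LinearIndependent K
        (fun i => (⟨ExtHM.scalarExt K (b i), hmem _ (b i).2⟩ : L')) :=
      LinearIndependent.of_comp L'.subtype h1
    simpa using h2.fintype_card_le_finrank
  have := ExtHM.bound_of_infinite hk (by rw [hW]; exact hkn) hL' hann' hnt'
  rw [hW] at this
  exact hrank.trans this
end
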